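/- arXiv:2310.14352 — 2 statements merged into one kernel-verified Lean document; each statement's English description precedes it below -/
import Mathlib

section
/- Let ℓ = 277 and let L be the unique degree-3 intermediate field of ℚ(ζ_ℓ)/ℚ. Then the class number of L is 4, and the ideal class group of L is isomorphic to (ℤ/2ℤ) × (ℤ/2ℤ). -/
instance (ℓ : ℕ+) : FiniteDimensional ℚ (CyclotomicField ℓ ℚ) :=
  inferInstance

instance (ℓ : ℕ+) (L : IntermediateField ℚ (CyclotomicField ℓ ℚ)) : NumberField L := ⟨⟩

namespace C277
open NumberField Polynomial Module


structure Dat (K : Type*) [Field K] [NumberField K] (a b : 𝓞 K) : Prop where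
  fin : finrank ℚ K = 3
  aa : a * a = 62 - 3 * a + 4 * b
  ab : a * b = -28 + 6 * a + 2 * b
  bb : b * b = 58 - 4 * a - 7 * b

variable {K : Type*} [Field K] [NumberField K] {a b : 𝓞 K}

noncomputable def f : ℤ[X] := X ^ 3 + X ^ 2 - 92 * X + 236

lemma f_deg : f.natDegree = 3 := by unfold f; compute_degree!

lemma f_monic : f.Monic := by unfold f; monicity!

instance : Fact (Nat.Prime 3) := ⟨by norm_num⟩

lemma f_irr : Irreducible f := by
  refine f_monic.irreducible_of_irreducible_map (Int.castRingHom (ZMod 3)) _ ?_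
  have hm : (f.map (Int.castRingHom (ZMod 3))).Monic := f_monic.map _
  have hd : (f.map (Int.castRingHom (ZMod 3))).natDegree = 3 := by
    rw [f_monic.natDegree_map, f_deg]
  rw [hm.irreducible_iff_roots_eq_zero_of_degree_le_three (by omega) (by omega)]
  rw [Multiset.eq_zero_iff_forall_notMem]
  intro x hx
  rw [mem_roots hm.ne_zero, IsRoot.def] at hx
  simp only [f, Polynomial.map_add, Polynomial.map_sub, Polynomial.map_mul, Polynomial.map_pow,
    Polynomial.map_X, Polynomial.map_ofNat, eval_add, eval_sub, eval_mul, eval_pow, eval_X,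
    eval_ofNat] at hx
  revert x
  decide

namespace Dat

lemma root (h : Dat K a b) : a ^ 3 + a ^ 2 - 92 * a + 236 = 0 := by
  have h1 := h.aa; have h2 := h.ab
  linear_combination (a - 2) * h1 + 4 * h2

lemma minpoly_eq (h : Dat K a b) : minpoly ℚ (a : K) = f.map (algebraMap ℤ ℚ) := by
  symm
  apply minpoly.eq_of_irreducible_of_monic
  · exact (f_monic.irreducible_iff_irreducible_map_fraction_map).mp f_irr
  · have := congrArg (algebraMap (𝓞 K) K) h.root
    simp only [map_add, map_sub, map_mul, map_pow, map_ofNat, map_zero] at this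
    simp only [f, Polynomial.map_add, Polynomial.map_sub, Polynomial.map_mul, Polynomial.map_pow,
      Polynomial.map_X, Polynomial.map_ofNat, map_add, map_sub, map_mul, map_pow, aeval_X, map_ofNat]
    exact this
  · exact f_monic.map _

lemma indep (h : Dat K a b) : LinearIndependent ℚ ![(1 : K), (a : K), (b : K)] := by
  rw [Fintype.linearIndependent_iff]
  intro g hg
  simp only [Fin.sum_univ_three, Matrix.cons_val_zero, Matrix.cons_val_one, Matrix.cons_val] at hg
  have haa := congrArg (algebraMap (𝓞 K) K) h.aa
  simp only [map_add, map_sub, map_mul, map_ofNat] at haa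
  set p : ℚ[X] := C (g 2) * X ^ 2 + C (4 * g 1 + 3 * g 2) * X + C (4 * g 0 - 62 * g 2) with hp
  have hr : aeval (a : K) p = 0 := by
    simp only [hp, map_add, map_mul, map_pow, aeval_X, aeval_C, map_sub, map_ofNat]
    simp only [Algebra.smul_def] at hg
    linear_combination 4 * hg + algebraMap ℚ K (g 2) * haa
  have hdeg : p.degree < (minpoly ℚ (a : K)).degree := by
    rw [h.minpoly_eq, degree_eq_natDegree (f_monic.map _).ne_zero, f_monic.natDegree_map, f_deg]
    refine lt_of_le_of_lt (degree_quadratic_le) (by norm_num)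
  have hp0 : p = 0 := by
    by_contra hne
    exact absurd (minpoly.degree_le_of_ne_zero ℚ (a : K) hne hr) (not_le.mpr hdeg)
  have c2 : g 2 = 0 := by
    have := congrArg (fun q => q.coeff 2) hp0
    simpa [hp, coeff_X, coeff_C] using this
  have c1 : 4 * g 1 + 3 * g 2 = 0 := by
    have := congrArg (fun q => q.coeff 1) hp0
    simpa [hp, coeff_X, coeff_C] using this
  have c0 : 4 * g 0 - 62 * g 2 = 0 := by
    have := congrArg (fun q => q.coeff 0) hp0
    simpa [hp, coeff_X, coeff_C] using this
  intro i
  fin_cases i <;> simp <;> linarith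

noncomputable def qb (h : Dat K a b) : Basis (Fin 3) ℚ K :=
  basisOfLinearIndependentOfCardEqFinrank h.indep (by simp [h.fin])

lemma qb_coe (h : Dat K a b) : ⇑h.qb = ![(1 : K), (a : K), (b : K)] := by
  simp [qb]

lemma lmm (h : Dat K a b) {x y z : ℚ} {c : K} (hc : c = x + y * a + z * b) :
    Algebra.leftMulMatrix h.qb c = !![x, 62 * y - 28 * z, -28 * y + 58 * z;
      y, x - 3 * y + 6 * z, 6 * y - 4 * z; z, 4 * y + 2 * z, x + 2 * y - 7 * z] := by
  have haa := congrArg (algebraMap (𝓞 K) K) h.aa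
  have hab := congrArg (algebraMap (𝓞 K) K) h.ab
  have hbb := congrArg (algebraMap (𝓞 K) K) h.bb
  simp only [map_add, map_sub, map_mul, map_neg, map_ofNat] at haa hab hbb
  have key : ∀ (u v w : ℚ) (t : K), t = u + v * a + w * b → h.qb.repr t = Finsupp.equivFunOnFinite.symm ![u, v, w] := by
    intro u v w t ht
    rw [← h.qb.repr.apply_symm_apply (Finsupp.equivFunOnFinite.symm ![u, v, w])]
    congr 1
    rw [h.qb.repr_symm_apply, Finsupp.linearCombination_apply, Finsupp.sum_fintype _ _ (by simp)]
    simp [Fin.sum_univ_three, h.qb_coe, ht, Algebra.smul_def]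
  have e0 := key x y z (c * 1) (by rw [hc]; ring)
  have e1 := key (62 * y - 28 * z) (x - 3 * y + 6 * z) (4 * y + 2 * z) (c * a) (by
    rw [hc]; push_cast; linear_combination (y : K) * haa + (z : K) * hab)
  have e2 := key (-28 * y + 58 * z) (6 * y - 4 * z) (x + 2 * y - 7 * z) (c * b) (by
    rw [hc]; push_cast; linear_combination (y : K) * hab + (z : K) * hbb)
  ext i j
  rw [Algebra.leftMulMatrix_eq_repr_mul, h.qb_coe]
  fin_cases j
  · simp [-mul_one, e0]; fin_cases i <;> simp
  · simp [e1]; fin_cases i <;> simp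
  · simp [e2]; fin_cases i <;> simp

lemma tr (h : Dat K a b) {x y z : ℤ} {c : 𝓞 K} (hc : c = x + y * a + z * b) :
    Algebra.trace ℤ (𝓞 K) c = 3 * x - y - z := by
  have := h.lmm (x := x) (y := y) (z := z) (c := c) (by rw [hc]; simp)
  have h2 := Algebra.trace_eq_matrix_trace h.qb (c : K)
  rw [this, ← Algebra.coe_trace_int] at h2
  simp [Matrix.trace_fin_three] at h2
  have h3 : ((Algebra.trace ℤ (𝓞 K) c : ℤ) : ℚ) = ((3 * x - y - z : ℤ) : ℚ) := by
    rw [h2]; push_cast; ring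
  exact_mod_cast h3

lemma nm (h : Dat K a b) {x y z : ℤ} {c : 𝓞 K} (hc : c = x + y * a + z * b) :
    Algebra.norm ℤ c = Matrix.det !![x, 62 * y - 28 * z, -28 * y + 58 * z;
      y, x - 3 * y + 6 * z, 6 * y - 4 * z; z, 4 * y + 2 * z, x + 2 * y - 7 * z] := by
  have := h.lmm (x := x) (y := y) (z := z) (c := c) (by rw [hc]; simp)
  have h2 := Algebra.norm_eq_matrix_det h.qb (c : K)
  rw [this, ← Algebra.coe_norm_int] at h2
  have h3 : ((Algebra.norm ℤ c : ℤ) : ℚ) = ((Matrix.det !![x, 62 * y - 28 * z, -28 * y + 58 * z;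
      y, x - 3 * y + 6 * z, 6 * y - 4 * z; z, 4 * y + 2 * z, x + 2 * y - 7 * z] : ℤ) : ℚ) := by
    rw [h2]; simp [Matrix.det_fin_three]
  exact_mod_cast h3

lemma disc (h : Dat K a b) : Algebra.discr ℤ ![1, a, b] = 277 ^ 2 := by
  rw [Algebra.discr_def, Matrix.det_fin_three]
  simp only [Algebra.traceMatrix_apply, Algebra.traceForm_apply, Matrix.cons_val_zero,
    Matrix.cons_val_one, Matrix.cons_val]
  have ba : b * a = -28 + 6 * a + 2 * b := by rw [mul_comm, h.ab]
  rw [h.tr (x := 3 - 2) (y := 0) (z := 0) (c := 1 * 1) (by simp),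
    h.tr (x := 0) (y := 1) (z := 0) (c := 1 * a) (by simp),
    h.tr (x := 0) (y := 0) (z := 1) (c := 1 * b) (by simp),
    h.tr (x := 0) (y := 1) (z := 0) (c := a * 1) (by simp),
    h.tr (x := 0) (y := 0) (z := 1) (c := b * 1) (by simp),
    h.tr (x := 62) (y := -3) (z := 4) (c := a * a) (by rw [h.aa]; push_cast; ring),
    h.tr (x := -28) (y := 6) (z := 2) (c := a * b) (by rw [h.ab]; push_cast; ring),
    h.tr (x := -28) (y := 6) (z := 2) (c := b * a) (by rw [ba]; push_cast; ring),
    h.tr (x := 58) (y := -4) (z := -7) (c := b * b) (by rw [h.bb]; push_cast; ring)]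
  norm_num

lemma det_sq (h : Dat K a b) (e : Basis (Fin 3) ℤ (𝓞 K)) :
    277 ^ 2 = (e.det ![1, a, b]) ^ 2 * NumberField.discr K := by
  have h1 := Algebra.discr_of_matrix_vecMul (A := ℤ) e (e.toMatrix ![1, a, b])
  have h2 : (Matrix.vecMul e ((e.toMatrix ![1, a, b]).map (algebraMap ℤ (𝓞 K)))) = ![1, a, b] := by
    ext1 i
    simp only [Matrix.vecMul, dotProduct, Matrix.map_apply]
    conv_rhs => rw [← e.sum_toMatrix_smul_self ![1, a, b] i]
    simp [Algebra.smul_def, mul_comm]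
  rw [h2, h.disc, discr_eq_discr, ← Basis.det_apply] at h1
  exact h1

lemma isUnit_det (h : Dat K a b) (e : Basis (Fin 3) ℤ (𝓞 K)) : IsUnit (e.det ![1, a, b]) := by
  have h1 := h.det_sq e
  have h3 := abs_discr_gt_two (K := K) (by rw [h.fin]; norm_num)
  set d := e.det ![1, a, b]
  have hp : Prime (277 : ℤ) := by norm_num
  by_contra hu
  have : (277 : ℤ) ∣ d := by
    have hd : d ∣ 277 ^ 2 := by rw [h1]; exact ⟨d * NumberField.discr K, by ring⟩
    rw [Int.isUnit_iff_natAbs_eq] at hu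
    have hd' : d.natAbs ∣ 277 ^ 2 := by simpa using Int.natAbs_dvd_natAbs.mpr hd
    obtain ⟨k, hk, hk'⟩ := (Nat.dvd_prime_pow (by norm_num : Nat.Prime 277)).mp hd'
    rw [← Int.natCast_dvd_natCast] at hd'
    have hk0 : k ≠ 0 := by rintro rfl; simp at hk'; exact hu hk'
    have : 277 ∣ d.natAbs := by rw [hk']; exact dvd_pow_self _ hk0
    exact Int.natCast_dvd.mpr this
  obtain ⟨c, hc⟩ := this
  rw [hc] at h1
  have h4 : c ^ 2 * discr K = 1 := by nlinarith
  have h5 : discr K ∣ 1 := Dvd.intro_left _ h4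
  rcases Int.isUnit_iff.mp (isUnit_of_dvd_one h5) with h6 | h6 <;> rw [h6] at h3 <;> norm_num at h3

lemma exB (h : Dat K a b) : Nonempty (Basis (Fin 3) ℤ (𝓞 K)) := by
  have hc : Fintype.card (Free.ChooseBasisIndex ℤ (𝓞 K)) = 3 := by
    rw [← finrank_eq_card_chooseBasisIndex, RingOfIntegers.rank, h.fin]
  exact ⟨(RingOfIntegers.basis K).reindex (Fintype.equivFinOfCardEq hc)⟩

lemma coord (h : Dat K a b) (c : 𝓞 K) : ∃ x y z : ℤ, c = x + y * a + z * b := by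
  obtain ⟨e⟩ := h.exB
  have h1 := ((Module.Basis.is_basis_iff_det e).mpr (h.isUnit_det e)).2
  have h2 : c ∈ Submodule.span ℤ (Set.range ![1, a, b]) := by rw [h1]; trivial
  rw [Submodule.mem_span_range_iff_exists_fun] at h2
  obtain ⟨g, hg⟩ := h2
  refine ⟨g 0, g 1, g 2, ?_⟩
  rw [← hg]
  simp [Fin.sum_univ_three]

lemma coord_inj (h : Dat K a b) {x y z x' y' z' : ℤ}
    (hh : (x + y * a + z * b : 𝓞 K) = x' + y' * a + z' * b) : x = x' ∧ y = y' ∧ z = z' := by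
  have h1 := Fintype.linearIndependent_iff.mp h.indep ![(x - x' : ℤ), (y - y' : ℤ), (z - z' : ℤ)] (by
    have := congrArg (algebraMap (𝓞 K) K) hh
    simp at this
    simp [Fin.sum_univ_three, Algebra.smul_def]
    linear_combination this)
  have h2 := h1 0; have h3 := h1 1; have h4 := h1 2
  simp at h2 h3 h4
  rw [sub_eq_zero] at h2 h3 h4
  exact ⟨by exact_mod_cast h2, by exact_mod_cast h3, by exact_mod_cast h4⟩

lemma absdiscr_le (h : Dat K a b) : |discr K| ≤ 277 ^ 2 := by
  obtain ⟨e⟩ := h.exB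
  apply Int.le_of_dvd (by norm_num)
  rw [abs_dvd, h.det_sq e]
  exact dvd_mul_left _ _

end Dat
end C277

namespace C277
open NumberField Polynomial Module


set_option linter.unusedSectionVars false
set_option linter.unusedSimpArgs false

variable {K : Type*} [Field K] [NumberField K] {a b : 𝓞 K}
namespace Dat

lemma exHom (h : Dat K a b) (q : ℕ) (r s : ZMod q) (h1 : r * r = 62 - 3 * r + 4 * s)
    (h2 : r * s = -28 + 6 * r + 2 * s) (h3 : s * s = 58 - 4 * r - 7 * s) :
    ∃ φ : 𝓞 K →+* ZMod q, φ a = r ∧ φ b = s := by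
  choose X Y Z hX using h.coord
  have key : ∀ (c : 𝓞 K) (x y z : ℤ), c = x + y * a + z * b →
      ((X c : ZMod q) + Y c * r + Z c * s) = x + y * r + z * s := by
    intro c x y z hc
    obtain ⟨e1, e2, e3⟩ := h.coord_inj ((hX c).symm.trans hc)
    rw [e1, e2, e3]
  refine ⟨{ toFun := fun c => (X c : ZMod q) + Y c * r + Z c * s
            map_one' := ?_, map_zero' := ?_, map_mul' := ?_, map_add' := ?_ }, ?_, ?_⟩
  · rw [key 1 1 0 0 (by simp)]; simp
  · intro c d
    rw [key (c * d) (X c * X d + 62 * (Y c * Y d) - 28 * (Y c * Z d + Z c * Y d) + 58 * (Z c * Z d))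
      (X c * Y d + Y c * X d - 3 * (Y c * Y d) + 6 * (Y c * Z d + Z c * Y d) - 4 * (Z c * Z d))
      (X c * Z d + Z c * X d + 4 * (Y c * Y d) + 2 * (Y c * Z d + Z c * Y d) - 7 * (Z c * Z d))]
    · push_cast
      linear_combination (-(Y c * Y d : ZMod q)) * h1 - (Y c * Z d + Z c * Y d : ZMod q) * h2
        - (Z c * Z d : ZMod q) * h3
    · conv_lhs => rw [hX c, hX d]
      push_cast
      linear_combination (Y c * Y d : 𝓞 K) * h.aa + (Y c * Z d + Z c * Y d : 𝓞 K) * h.ab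
        + (Z c * Z d : 𝓞 K) * h.bb
  · rw [key 0 0 0 0 (by simp)]; simp
  · intro c d
    rw [key (c + d) (X c + X d) (Y c + Y d) (Z c + Z d)]
    · push_cast; ring
    · conv_lhs => rw [hX c, hX d]
      push_cast; ring
  · show (X a : ZMod q) + Y a * r + Z a * s = r
    rw [key a 0 1 0 (by simp)]; simp
  · show (X b : ZMod q) + Y b * r + Z b * s = s
    rw [key b 0 0 1 (by simp)]; simp

lemma hom_rel (h : Dat K a b) {R : Type*} [CommRing R] (φ : 𝓞 K →+* R) :
    φ a * φ a = 62 - 3 * φ a + 4 * φ b ∧ φ a * φ b = -28 + 6 * φ a + 2 * φ b ∧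
    φ b * φ b = 58 - 4 * φ a - 7 * φ b := by
  refine ⟨?_, ?_, ?_⟩
  · simpa only [map_add, map_sub, map_neg, map_mul, map_ofNat] using congrArg φ h.aa
  · simpa only [map_add, map_sub, map_neg, map_mul, map_ofNat] using congrArg φ h.ab
  · simpa only [map_add, map_sub, map_neg, map_mul, map_ofNat] using congrArg φ h.bb

lemma hom_ext (h : Dat K a b) {R : Type*} [CommRing R] (φ ψ : 𝓞 K →+* R)
    (h1 : φ a = ψ a) (h2 : φ b = ψ b) : φ = ψ := by
  ext c
  obtain ⟨x, y, z, rfl⟩ := h.coord c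
  simp [h1, h2]

end Dat

instance : Fact (Nat.Prime 19) := ⟨by norm_num⟩
instance : Fact (Nat.Prime 61) := ⟨by norm_num⟩
instance : Fact (Nat.Prime 13) := ⟨by norm_num⟩

noncomputable def chi (q : ℕ) [Fact q.Prime] (φ : 𝓞 K →+* ZMod q) : (𝓞 K)ˣ →* ℤˣ :=
  (quadraticChar (ZMod q)).toUnitHom.comp (Units.map φ.toMonoidHom)

lemma chi_val (q : ℕ) [Fact q.Prime] (φ : 𝓞 K →+* ZMod q) (u : (𝓞 K)ˣ) :
    ((chi q φ u : ℤˣ) : ℤ) = quadraticChar (ZMod q) (φ u) := by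
  simp [chi, MulChar.coe_toUnitHom]

lemma two_gens (hf : finrank ℚ K = 3) : ∃ w1 w2 : (𝓞 K)ˣ, ∀ u : (𝓞 K)ˣ, ∃ m n : ℤ,
    u = w1 ^ m * w2 ^ n ∨ u = -1 * (w1 ^ m * w2 ^ n) := by
  have hr : Units.rank K ≤ 2 := by
    have h1 := InfinitePlace.card_eq_nrRealPlaces_add_nrComplexPlaces (K := K)
    have h2 := InfinitePlace.card_add_two_mul_card_eq_rank (K := K)
    rw [Units.rank]
    omega
  have h0 : ∀ u : (𝓞 K)ˣ, ∃ e : Fin (Units.rank K) → ℤ,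
      u = ∏ i, Units.fundSystem K i ^ e i ∨ u = -1 * ∏ i, Units.fundSystem K i ^ e i := by
    intro u
    obtain ⟨⟨ζ, e⟩, he, -⟩ := Units.exist_unique_eq_mul_prod K u
    refine ⟨e, ?_⟩
    rcases Units.torsion_eq_one_or_neg_one_of_odd_finrank (by rw [hf]; decide) ζ with h1 | h1
    · left; simpa [h1] using he
    · right; simpa [h1] using he
  obtain ⟨r, hr, g, h0⟩ : ∃ r ≤ 2, ∃ g : Fin r → (𝓞 K)ˣ, ∀ u : (𝓞 K)ˣ, ∃ e : Fin r → ℤ,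
      u = ∏ i, g i ^ e i ∨ u = -1 * ∏ i, g i ^ e i := ⟨_, hr, _, h0⟩
  interval_cases r
  · refine ⟨1, 1, fun u => ⟨0, 0, ?_⟩⟩
    obtain ⟨e, he⟩ := h0 u
    simpa using he
  · refine ⟨g 0, 1, fun u => ?_⟩
    obtain ⟨e, he⟩ := h0 u
    exact ⟨e 0, 0, by simpa using he⟩
  · refine ⟨g 0, g 1, fun u => ?_⟩
    obtain ⟨e, he⟩ := h0 u
    exact ⟨e 0, e 1, by simpa [Fin.prod_univ_two] using he⟩

lemma card_sq (hf : finrank ℚ K = 3) :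
    ∃ F : (ℤˣ × ℤˣ × ℤˣ) → (𝓞 K)ˣ ⧸ (powMonoidHom 2 : (𝓞 K)ˣ →* (𝓞 K)ˣ).range,
      Function.Surjective F := by
  obtain ⟨w1, w2, hw⟩ := two_gens hf
  let π := QuotientGroup.mk' (powMonoidHom 2 : (𝓞 K)ˣ →* (𝓞 K)ˣ).range
  let s : ℤˣ → (𝓞 K)ˣ → (𝓞 K)ˣ := fun x w => if x = 1 then 1 else w
  have hs : ∀ (w : (𝓞 K)ˣ) (m : ℤ), ∃ x, π (s x w) = π (w ^ m) := by
    intro w m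
    have h2 : ∀ v : (𝓞 K)ˣ, π v ^ 2 = 1 := fun v => by
      rw [← map_pow]
      exact (QuotientGroup.eq_one_iff _).mpr ⟨v, rfl⟩
    rcases Int.even_or_odd' m with ⟨k, rfl | rfl⟩
    · refine ⟨1, ?_⟩
      have := h2 (w ^ k)
      simp only [s, if_true, map_one]
      rw [mul_comm, zpow_mul, map_zpow, ← this, ← map_pow]; norm_cast
    · refine ⟨-1, ?_⟩
      have := h2 (w ^ k)
      simp only [s]
      rw [if_neg (by decide), zpow_add, mul_comm 2 k, zpow_mul, map_mul, zpow_one]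
      have h3 : π ((w ^ k) ^ (2 : ℤ)) = π 1 := by rw [map_one, ← this, ← map_pow]; norm_cast
      rw [h3, ← map_mul, one_mul]
  refine ⟨fun t => π (s t.1 (-1) * (s t.2.1 w1 * s t.2.2 w2)), fun y => ?_⟩
  obtain ⟨u, rfl⟩ := QuotientGroup.mk'_surjective _ y
  obtain ⟨m, n, hu⟩ := hw u
  obtain ⟨y, hy⟩ := hs w1 m
  obtain ⟨z, hz⟩ := hs w2 n
  rcases hu with hu | hu
  · refine ⟨(1, y, z), ?_⟩
    show π _ = π u
    rw [hu]
    rw [map_mul, map_mul, hy, hz, map_mul]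
    simp only [s, if_true]
    rw [← map_mul, ← map_mul, one_mul]
  · refine ⟨(-1, y, z), ?_⟩
    show π _ = π u
    rw [hu]
    simp only [map_mul, hy, hz]
    simp [s]

lemma sq_of_surj (hf : finrank ℚ K = 3) (Ψ : (𝓞 K)ˣ →* ℤˣ × ℤˣ × ℤˣ) (hΨ : Function.Surjective Ψ)
    (u : (𝓞 K)ˣ) (hu : Ψ u = 1) : ∃ v, u = v ^ 2 := by
  obtain ⟨F, hF⟩ := card_sq hf
  let Φ : (𝓞 K)ˣ ⧸ (powMonoidHom 2 : (𝓞 K)ˣ →* (𝓞 K)ˣ).range →* ℤˣ × ℤˣ × ℤˣ :=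
    QuotientGroup.lift _ Ψ (by
      rintro _ ⟨v, rfl⟩
      simp only [powMonoidHom_apply, map_pow, MonoidHom.mem_ker]
      ext <;> simp)
  have hs : Function.Surjective Φ := fun y => by
    obtain ⟨v, rfl⟩ := hΨ y
    exact ⟨QuotientGroup.mk v, rfl⟩
  have hb : Function.Injective (Φ ∘ F) := Finite.injective_iff_surjective.mpr (hs.comp hF)
  have hi : Function.Injective Φ := by
    intro x y hxy
    obtain ⟨x, rfl⟩ := hF x
    obtain ⟨y, rfl⟩ := hF y
    rw [hb hxy]
  have h1 : (QuotientGroup.mk u : (𝓞 K)ˣ ⧸ (powMonoidHom 2 : (𝓞 K)ˣ →* (𝓞 K)ˣ).range) = 1 := by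
    apply hi
    rw [map_one]; exact hu
  rw [QuotientGroup.eq_one_iff] at h1
  obtain ⟨v, hv⟩ := h1
  exact ⟨v, by rw [← hv]; rfl⟩

def eps1 (h : Dat K a b) : (𝓞 K)ˣ where
  val := 23 - 4 * a + 2 * b
  inv := -337 - 60 * a - 46 * b
  val_inv := by linear_combination (240 : 𝓞 K) * h.aa + 64 * h.ab - 92 * h.bb
  inv_val := by linear_combination (240 : 𝓞 K) * h.aa + 64 * h.ab - 92 * h.bb

def eps2 (h : Dat K a b) : (𝓞 K)ˣ where
  val := 21 - 2 * a - 6 * b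
  inv := -291 + 46 * a - 14 * b
  val_inv := by linear_combination (-92 : 𝓞 K) * h.aa + (28 - 276) * h.ab + 84 * h.bb
  inv_val := by linear_combination (-92 : 𝓞 K) * h.aa + (28 - 276) * h.ab + 84 * h.bb

/-- `γ = a - 3` is not a unit times a square. -/
lemma Dat.gamma (h : Dat K a b) (u : (𝓞 K)ˣ) (c : 𝓞 K) : a - 3 ≠ u * c ^ 2 := by
  intro hc
  obtain ⟨φ1, a1, b1⟩ := h.exHom 19 8 16 (by decide) (by decide) (by decide)
  obtain ⟨φ2, a2, b2⟩ := h.exHom 61 42 30 (by decide) (by decide) (by decide)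
  obtain ⟨φ3, a3, b3⟩ := h.exHom 61 30 49 (by decide) (by decide) (by decide)
  obtain ⟨φ4, a4, b4⟩ := h.exHom 13 10 4 (by decide) (by decide) (by decide)
  let Ψ : (𝓞 K)ˣ →* ℤˣ × ℤˣ × ℤˣ := (chi 19 φ1).prod ((chi 61 φ2).prod (chi 61 φ3))
  have v1 : Ψ (-1) = (-1, 1, 1) := by
    refine Prod.ext (Units.ext ?_) (Prod.ext (Units.ext ?_) (Units.ext ?_)) <;>
      simp only [Ψ, MonoidHom.prod_apply, chi_val, Units.val_neg, Units.val_one, map_neg, map_one] <;>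
      decide +kernel
  have v2 : Ψ (eps1 h) = (1, -1, 1) := by
    refine Prod.ext (Units.ext ?_) (Prod.ext (Units.ext ?_) (Units.ext ?_)) <;>
      simp only [Ψ, MonoidHom.prod_apply, chi_val, eps1, map_neg, map_add, map_sub, map_mul,
        map_ofNat, a1, b1, a2, b2, a3, b3] <;>
      decide +kernel
  have v3 : Ψ (eps2 h) = (1, 1, -1) := by
    refine Prod.ext (Units.ext ?_) (Prod.ext (Units.ext ?_) (Units.ext ?_)) <;>
      simp only [Ψ, MonoidHom.prod_apply, chi_val, eps2, map_neg, map_add, map_sub, map_mul,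
        map_ofNat, a1, b1, a2, b2, a3, b3] <;>
      decide +kernel
  have hsurj : Function.Surjective Ψ := by
    rintro ⟨x, y, z⟩
    rcases Int.units_eq_one_or x with rfl | rfl <;> rcases Int.units_eq_one_or y with rfl | rfl <;>
      rcases Int.units_eq_one_or z with rfl | rfl
    · exact ⟨1, map_one _⟩
    · exact ⟨eps2 h, v3⟩
    · exact ⟨eps1 h, v2⟩
    · exact ⟨eps1 h * eps2 h, by rw [map_mul, v2, v3]; rfl⟩
    · exact ⟨-1, v1⟩
    · exact ⟨(-1) * eps2 h, by rw [map_mul, v1, v3]; rfl⟩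
    · exact ⟨(-1) * eps1 h, by rw [map_mul, v1, v2]; rfl⟩
    · exact ⟨(-1) * (eps1 h * eps2 h), by rw [map_mul, map_mul, v1, v2, v3]; rfl⟩
  have sqc : ∀ (q : ℕ) [Fact q.Prime] (φ : 𝓞 K →+* ZMod q),
      quadraticChar (ZMod q) (φ (a - 3)) = 1 → quadraticChar (ZMod q) (φ u) = 1 := by
    intro q _ φ hq
    rw [hc, map_mul, map_mul, map_pow, map_pow] at hq
    have hne : quadraticChar (ZMod q) (φ c) ≠ 0 := by
      intro h0; rw [h0] at hq; simp at hq
    rcases quadraticChar_isQuadratic (ZMod q) (φ c) with h0 | h0 | h0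
    · exact absurd h0 hne
    · rw [h0] at hq; simpa using hq
    · rw [h0] at hq; simpa using hq
  have hu : Ψ u = 1 := by
    refine Prod.ext (Units.ext ?_) (Prod.ext (Units.ext ?_) (Units.ext ?_)) <;>
      simp only [Ψ, MonoidHom.prod_apply, chi_val] <;> refine (sqc _ _ ?_).trans (by simp) <;>
      simp only [map_sub, map_ofNat, a1, a2, a3] <;> decide +kernel
  obtain ⟨v, hv⟩ := sq_of_surj h.fin Ψ hsurj u hu
  have : φ4 (a - 3) = φ4 (v * c) * φ4 (v * c) := by
    rw [hc, hv, ← map_mul]; congr 1; push_cast; ring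
  rw [map_sub, map_ofNat, a4] at this
  revert this
  generalize φ4 (v * c) = t
  revert t
  decide

end C277

namespace C277
open NumberField Polynomial Module Ideal


set_option linter.unusedSectionVars false
set_option linter.unusedSimpArgs false

variable {K : Type*} [Field K] [NumberField K] {a b : 𝓞 K}

lemma prime_norm [IsGalois ℚ K] (hf : finrank ℚ K = 3) (P : Ideal (𝓞 K)) [hP : P.IsPrime] (h0 : P ≠ ⊥) :
    ∃ p : ℕ, p.Prime ∧ (p : 𝓞 K) ∈ P ∧ (absNorm P = p ∨ (absNorm P = p ^ 3 ∧ P = span {(p : 𝓞 K)})) := by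
  have : P.IsMaximal := hP.isMaximal h0
  obtain ⟨q, hq⟩ := IsPrincipalIdealRing.principal (under ℤ P)
  rw [submodule_span_eq] at hq
  let p := q.natAbs
  have hqp : span {(p : ℤ)} = under ℤ P := by rw [hq]; simp [p]
  have hne : under ℤ P ≠ ⊥ := fun h => h0 (eq_bot_of_comap_eq_bot (R := ℤ) h)
  have hp0 : (p : ℤ) ≠ 0 := by
    intro h; rw [h] at hqp; apply hne; rw [← hqp]; simp
  have hpr : Prime (p : ℤ) := (span_singleton_prime hp0).mp (hqp ▸ (inferInstance : (under ℤ P).IsPrime))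
  have hpn : p.Prime := Nat.prime_iff_prime_int.mpr hpr
  have hmem : (p : 𝓞 K) ∈ P := by
    have : (p : ℤ) ∈ under ℤ P := by rw [← hqp]; exact mem_span_singleton_self _
    simpa [under, mem_comap] using this
  have hl : P.LiesOver (span {(p : ℤ)}) := by rw [hqp]; exact over_under P
  have hmax : (span {(p : ℤ)}).IsMaximal := by
    rw [hqp]; infer_instance
  have hn : p ^ P.inertiaDeg ℤ = absNorm P := by
    simpa using (natAbs_pow_inertiaDeg (p : ℤ) P)
  have hd : P.inertiaDeg ℤ ∣ 3 := by
    have h1 := ncard_primesOver_mul_ramificationIdxIn_mul_inertiaDegIn (span {(p : ℤ)}) (𝓞 K) Gal(K/ℚ)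
    rw [inertiaDegIn_eq_inertiaDeg (span {(p : ℤ)}) P Gal(K/ℚ), IsGalois.card_aut_eq_finrank, hf] at h1
    rw [← h1]
    exact (dvd_mul_left _ _).trans (dvd_mul_left _ _)
  refine ⟨p, hpn, hmem, ?_⟩
  rcases (Nat.dvd_prime Nat.prime_three).mp hd with h1 | h1
  · left; rw [← hn, h1, pow_one]
  · right
    have h2 : absNorm P = p ^ 3 := by rw [← hn, h1]
    refine ⟨h2, ?_⟩
    have hle : span {(p : 𝓞 K)} ≤ P := (span_singleton_le_iff_mem P).mpr hmem
    obtain ⟨J, hJ⟩ := dvd_iff_le.mpr hle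
    have h3 := congrArg absNorm hJ
    rw [map_mul, absNorm_span_natCast, RingOfIntegers.rank, hf, h2] at h3
    have h4 : absNorm J = 1 := by
      have : 0 < p ^ 3 := pow_pos hpn.pos 3
      exact (Nat.eq_of_mul_eq_mul_left this (by rw [mul_one]; exact h3)).symm
    rw [absNorm_eq_one_iff] at h4
    rw [hJ, h4, mul_top]

lemma exists_hom {p : ℕ} (hp : p.Prime) (P : Ideal (𝓞 K)) (hn : absNorm P = p) :
    ∃ φ : 𝓞 K →+* ZMod p, ∀ x, φ x = 0 ↔ x ∈ P := by
  have hc : Nat.card (𝓞 K ⧸ P) = p := by rw [← hn, absNorm_apply]; rfl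
  have : Finite (𝓞 K ⧸ P) := Nat.finite_of_card_ne_zero (by rw [hc]; exact hp.ne_zero)
  have := Fintype.ofFinite (𝓞 K ⧸ P)
  let e := ZMod.ringEquivOfPrime (𝓞 K ⧸ P) hp (by rw [← Nat.card_eq_fintype_card, hc])
  refine ⟨(e.symm : (𝓞 K ⧸ P) →+* ZMod p).comp (Ideal.Quotient.mk P), fun x => ?_⟩
  simp [Ideal.Quotient.eq_zero_iff_mem]

lemma Dat.splits (h : Dat K a b) {p : ℕ} (hp : p.Prime) (hlt : p < 62) (φ : 𝓞 K →+* ZMod p) :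
    p = 2 ∨ p = 13 ∨ p = 19 ∨ p = 37 ∨ p = 41 ∨ p = 59 ∨ p = 61 := by
  have h1 := congrArg φ h.root
  simp only [map_add, map_sub, map_neg, map_mul, map_pow, map_ofNat, map_zero] at h1
  generalize φ a = r at h1
  clear φ h
  interval_cases p <;> first | (exfalso; revert hp; norm_num; done) | (simp; done) | (exfalso; revert r; decide +kernel)

lemma nzd {I : Ideal (𝓞 K)} (h : I ≠ ⊥) : I ∈ nonZeroDivisors (Ideal (𝓞 K)) :=
  mem_nonZeroDivisors_of_ne_zero h

/-- classes -/
noncomputable def cls (I : Ideal (𝓞 K)) : ClassGroup (𝓞 K) :=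
  open Classical in if h : I ≠ ⊥ then ClassGroup.mk0 ⟨I, nzd h⟩ else 1

lemma cls_eq {I : Ideal (𝓞 K)} (h : I ≠ ⊥) : cls I = ClassGroup.mk0 ⟨I, nzd h⟩ := by
  simp [cls, h]

lemma cls_mul {I J : Ideal (𝓞 K)} (h : I ≠ ⊥) (h' : J ≠ ⊥) : cls (I * J) = cls I * cls J := by
  rw [cls_eq h, cls_eq h', cls_eq (mul_ne_zero h h'), ← map_mul]; rfl

lemma cls_span (x : 𝓞 K) : cls (span {x}) = 1 := by
  by_cases h : span {x} = ⊥
  · simp [cls, h]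
  · rw [cls_eq h, ClassGroup.mk0_eq_one_iff]; exact ⟨x, rfl⟩

lemma cls_eq_one {I : Ideal (𝓞 K)} (h : I ≠ ⊥) (h1 : cls I = 1) : ∃ x, I = span {x} := by
  rw [cls_eq h, ClassGroup.mk0_eq_one_iff] at h1
  obtain ⟨x, hx⟩ := h1
  exact ⟨x, hx⟩

lemma cls_mem (H : Subgroup (ClassGroup (𝓞 K))) (I : Ideal (𝓞 K)) (h0 : I ≠ ⊥)
    (h : ∀ P : Ideal (𝓞 K), P.IsPrime → P ≠ ⊥ → P ∣ I → cls P ∈ H) : cls I ∈ H := by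
  induction I using UniqueFactorizationMonoid.induction_on_prime with
  | h₁ => exact absurd rfl h0
  | h₂ I hI =>
    have : I = span {1} := by rw [Ideal.isUnit_iff.mp hI]; simp
    rw [this, cls_span]; exact H.one_mem
  | h₃ I P hI hP ih =>
    have hPp := isPrime_of_prime hP
    rw [cls_mul hP.ne_zero hI]
    exact H.mul_mem (h P hPp hP.ne_zero (dvd_mul_right _ _))
      (ih hI fun Q hQ hQ0 hQI => h Q hQ hQ0 (hQI.mul_left _))

lemma conj_mem [IsGalois ℚ K] (P : Ideal (𝓞 K)) [P.IsPrime] (x : 𝓞 K)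
    (hx : ((Algebra.norm ℤ x : ℤ) : 𝓞 K) ∈ P) : ∃ y ∈ P, Algebra.norm ℤ y = Algebra.norm ℤ x := by
  have h1 : ((Algebra.norm ℤ x : ℤ) : 𝓞 K) = ∏ σ : Gal(K/ℚ), RingOfIntegers.mapAlgEquiv σ x := by
    apply RingOfIntegers.ext
    have := Algebra.norm_eq_prod_automorphisms ℚ (x : K)
    rw [← Algebra.coe_norm_int] at this
    change algebraMap (𝓞 K) K _ = algebraMap (𝓞 K) K _
    rw [map_prod]
    refine Eq.trans ?_ (this.trans (Finset.prod_congr rfl fun σ _ => ?_))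
    · simp
    · rfl
  rw [h1, IsPrime.prod_mem_iff] at hx
  obtain ⟨σ, -, hσ⟩ := hx
  refine ⟨_, hσ, ?_⟩
  have h2 : ((Algebra.norm ℤ (RingOfIntegers.mapAlgEquiv σ x) : ℤ) : ℚ) = ((Algebra.norm ℤ x : ℤ) : ℚ) := by
    rw [Algebra.coe_norm_int, Algebra.coe_norm_int]
    exact (Algebra.norm_eq_of_algEquiv σ (x : K))
  exact_mod_cast h2

def IsTwo (H : Subgroup (ClassGroup (𝓞 K))) : Prop :=
  ∀ P : Ideal (𝓞 K), P.IsPrime → P ≠ ⊥ → (2 : 𝓞 K) ∈ P → cls P ∈ H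

lemma IsTwo.mem_of_pow {H : Subgroup (ClassGroup (𝓞 K))} (hH : IsTwo H) (J : Ideal (𝓞 K)) (k : ℕ)
    (hJ : absNorm J = 2 ^ k) : cls J ∈ H := by
  have hJ0 : J ≠ ⊥ := by
    rintro rfl; simp at hJ; exact absurd hJ.symm (by positivity)
  refine cls_mem H J hJ0 fun P hP hP0 hPJ => hH P hP hP0 ?_
  have h1 : ((absNorm J : ℕ) : 𝓞 K) ∈ P := (le_of_dvd hPJ) (absNorm_mem J)
  rw [hJ] at h1
  push_cast at h1
  exact hP.mem_of_pow_mem _ h1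

lemma IsTwo.mem_of_elt [IsGalois ℚ K] {H : Subgroup (ClassGroup (𝓞 K))} (hH : IsTwo H)
    (P : Ideal (𝓞 K)) [P.IsPrime] (hP0 : P ≠ ⊥) (p k : ℕ) (hp : 0 < p) (hpP : (p : 𝓞 K) ∈ P) (hn : absNorm P = p)
    (x : 𝓞 K) (hx : (Algebra.norm ℤ x).natAbs = p * 2 ^ k) : cls P ∈ H := by
  obtain ⟨y, hy, hyn⟩ := conj_mem P x (by
    have : ((Algebra.norm ℤ x).natAbs : 𝓞 K) ∈ P := by
      rw [hx]; push_cast; exact P.mul_mem_right _ hpP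
    rcases Int.natAbs_eq (Algebra.norm ℤ x) with h | h
    · rw [h]; simpa using this
    · rw [h]; simpa using this)
  obtain ⟨J, hJ⟩ := dvd_iff_le.mpr ((span_singleton_le_iff_mem P).mpr hy)
  have h1 := congrArg absNorm hJ
  rw [absNorm_span_singleton, hyn, hx, map_mul, hn] at h1
  have h2 : absNorm J = 2 ^ k := (Nat.eq_of_mul_eq_mul_left hp h1).symm
  have hJ0 : J ≠ ⊥ := by
    rintro rfl; simp at h2; exact absurd h2.symm (by positivity)
  have h3 := cls_span y
  rw [hJ, cls_mul hP0 hJ0] at h3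
  rw [eq_inv_of_mul_eq_one_left h3]
  exact H.inv_mem (hH.mem_of_pow J k h2)

lemma Dat.small [IsGalois ℚ K] (h : Dat K a b) {H : Subgroup (ClassGroup (𝓞 K))} (hH : IsTwo H)
    (P : Ideal (𝓞 K)) (hP : P.IsPrime) (hP0 : P ≠ ⊥) (hlt : absNorm P < 62) : cls P ∈ H := by
  obtain ⟨p, hp, hpP, hn | ⟨-, hn⟩⟩ := prime_norm h.fin P hP0
  swap
  · rw [hn, cls_span]; exact H.one_mem
  obtain ⟨φ, -⟩ := exists_hom hp P hn
  rw [hn] at hlt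
  rcases h.splits hp hlt φ with rfl | rfl | rfl | rfl | rfl | rfl | rfl
  · exact hH P hP hP0 (by exact_mod_cast hpP)
  · refine hH.mem_of_elt P hP0 _ 2 hp.pos hpP hn ((-4 : ℤ) + (0 : ℤ) * a + (1 : ℤ) * b) ?_
    rw [h.nm rfl, Matrix.det_fin_three]; simp
  · refine hH.mem_of_elt P hP0 _ 1 hp.pos hpP hn ((-11 : ℤ) + (-1 : ℤ) * a + (0 : ℤ) * b) ?_
    rw [h.nm rfl, Matrix.det_fin_three]; simp
  · refine hH.mem_of_elt P hP0 _ 1 hp.pos hpP hn ((-5 : ℤ) + (0 : ℤ) * a + (1 : ℤ) * b) ?_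
    rw [h.nm rfl, Matrix.det_fin_three]; simp
  · refine hH.mem_of_elt P hP0 _ 3 hp.pos hpP hn ((-1 : ℤ) + (-1 : ℤ) * a + (0 : ℤ) * b) ?_
    rw [h.nm rfl, Matrix.det_fin_three]; simp
  · refine hH.mem_of_elt P hP0 _ 2 hp.pos hpP hn ((0 : ℤ) + (-1 : ℤ) * a + (0 : ℤ) * b) ?_
    rw [h.nm rfl, Matrix.det_fin_three]; simp
  · refine hH.mem_of_elt P hP0 _ 2 hp.pos hpP hn ((-12 : ℤ) + (-1 : ℤ) * a + (0 : ℤ) * b) ?_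
    rw [h.nm rfl, Matrix.det_fin_three]; simp

lemma Dat.mink (h : Dat K a b) (C : ClassGroup (𝓞 K)) :
    ∃ I : Ideal (𝓞 K), I ≠ ⊥ ∧ cls I = C ∧ absNorm I < 62 := by
  obtain ⟨⟨I, hI0⟩, hI, hn⟩ := exists_ideal_in_class_of_norm_le C
  have hI0' : I ≠ ⊥ := nonZeroDivisors.ne_zero hI0
  refine ⟨I, hI0', by rw [cls_eq hI0', hI], ?_⟩
  have hr : InfinitePlace.nrComplexPlaces K = 0 := by
    have h2 := InfinitePlace.card_add_two_mul_card_eq_rank (K := K)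
    rw [h.fin] at h2
    have h3 : InfinitePlace.nrComplexPlaces K ≤ 1 := by omega
    have h4 := sign_discr K
    obtain ⟨e⟩ := h.exB
    have h5 := h.det_sq e
    have h6 : 0 < NumberField.discr K := by
      by_contra hneg
      push Not at hneg
      nlinarith [mul_nonneg (sq_nonneg (e.det ![1, a, b])) (neg_nonneg.mpr hneg)]
    rw [Int.sign_eq_one_of_pos h6] at h4
    interval_cases hh : InfinitePlace.nrComplexPlaces K
    · rfl
    · norm_num at h4
  rw [hr, h.fin] at hn
  have hs : √|(NumberField.discr K : ℝ)| ≤ 277 := by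
    rw [Real.sqrt_le_left (by norm_num)]
    exact_mod_cast h.absdiscr_le
  have h7 : ((absNorm I : ℕ) : ℝ) < 62 := by
    refine lt_of_le_of_lt hn ?_
    norm_num [Nat.factorial]
    linarith
  exact_mod_cast h7

lemma Dat.top [IsGalois ℚ K] (h : Dat K a b) {H : Subgroup (ClassGroup (𝓞 K))} (hH : IsTwo H)
    (C : ClassGroup (𝓞 K)) : C ∈ H := by
  obtain ⟨I, hI0, rfl, hn⟩ := h.mink C
  refine cls_mem H I hI0 fun P hP hP0 hPI => h.small hH P hP hP0 (lt_of_le_of_lt ?_ hn)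
  exact Nat.le_of_dvd (Nat.pos_of_ne_zero (by rwa [Ne, absNorm_eq_zero_iff]))
    (absNorm_dvd_absNorm_of_le (le_of_dvd hPI))

end C277

namespace C277
open NumberField Polynomial Module Ideal


set_option linter.unusedSectionVars false
set_option linter.unusedSimpArgs false

variable {K : Type*} [Field K] [NumberField K] {a b : 𝓞 K}

lemma Dat.rot (h : Dat K a b) : Dat K b (-1 - a - b) := by
  refine ⟨h.fin, ?_, ?_, ?_⟩
  · linear_combination h.bb
  · linear_combination -h.ab - h.bb
  · linear_combination h.aa + 2 * h.ab + h.bb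

structure TwoP (K : Type*) [Field K] [NumberField K] (a b : 𝓞 K) (P : Ideal (𝓞 K)) (r s : ℤ) : Prop where
  pr : P.IsPrime
  ne : P ≠ ⊥
  nm : absNorm P = 2
  mem : ∀ x y z : ℤ, ((x : 𝓞 K) + y * a + z * b) ∈ P ↔ (2 : ℤ) ∣ x + y * r + z * s

lemma Dat.exTwo (h : Dat K a b) (r s : ℤ) (h1 : (r : ZMod 2) * r = 62 - 3 * r + 4 * s)
    (h2 : (r : ZMod 2) * s = -28 + 6 * r + 2 * s) (h3 : (s : ZMod 2) * s = 58 - 4 * r - 7 * s) :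
    ∃ P, TwoP K a b P r s := by
  obtain ⟨φ, ha, hb⟩ := h.exHom 2 (r : ZMod 2) (s : ZMod 2) h1 h2 h3
  have hm : ∀ x y z : ℤ, ((x : 𝓞 K) + y * a + z * b) ∈ RingHom.ker φ ↔ (2 : ℤ) ∣ x + y * r + z * s := by
    intro x y z
    rw [RingHom.mem_ker, map_add, map_add, map_mul, map_mul, ha, hb, map_intCast, map_intCast, map_intCast]
    have := ZMod.intCast_zmod_eq_zero_iff_dvd (x + y * r + z * s) 2
    push_cast at this
    exact this
  have hn : absNorm (RingHom.ker φ) = 2 := by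
    rw [absNorm_apply]
    have e := RingHom.quotientKerEquivOfSurjective (ZMod.ringHom_surjective φ)
    change Nat.card (𝓞 K ⧸ RingHom.ker φ) = 2
    rw [Nat.card_congr e.toEquiv]; simp
  refine ⟨RingHom.ker φ, RingHom.ker_isPrime φ, ?_, hn, hm⟩
  intro h0; rw [h0] at hn; simp at hn

lemma TwoP.two {P : Ideal (𝓞 K)} {r s : ℤ} (hP : TwoP K a b P r s) : (2 : 𝓞 K) ∈ P := by
  have := (hP.mem 2 0 0).mpr (by norm_num)
  simpa using this

lemma Dat.eqP (h : Dat K a b) {P : Ideal (𝓞 K)} {r s : ℤ} (hP : TwoP K a b P r s) {Q : Ideal (𝓞 K)}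
    (hQ : Q.IsPrime) (h2 : (2 : 𝓞 K) ∈ Q) (ha : a - r ∈ Q) (hb : b - s ∈ Q) : Q = P := by
  have := hP.pr.isMaximal hP.ne
  refine (this.eq_of_le hQ.ne_top ?_).symm
  intro x hx
  obtain ⟨x, y, z, rfl⟩ := h.coord x
  obtain ⟨m, hm⟩ := (hP.mem x y z).mp hx
  have : (x : 𝓞 K) + y * a + z * b = m * 2 + y * (a - r) + z * (b - s) := by
    have := congrArg (Int.cast : ℤ → 𝓞 K) hm
    push_cast at this
    linear_combination this
  rw [this]
  exact Q.add_mem (Q.add_mem (Q.mul_mem_left _ h2) (Q.mul_mem_left _ ha)) (Q.mul_mem_left _ hb)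

lemma Dat.cases (h : Dat K a b) {P1 P2 P3 : Ideal (𝓞 K)} (h1 : TwoP K a b P1 0 0)
    (h2 : TwoP K a b P2 0 1) (h3 : TwoP K a b P3 1 0) {Q : Ideal (𝓞 K)}
    (hQ : Q.IsPrime) (hq : (2 : 𝓞 K) ∈ Q) : Q = P1 ∨ Q = P2 ∨ Q = P3 := by
  have ha : a * (a - 1) ∈ Q := by
    have : a * (a - 1) = (31 - 2 * a + 2 * b) * 2 := by linear_combination h.aa
    rw [this]; exact Q.mul_mem_left _ hq
  have hab : a * b ∈ Q := by
    have : a * b = (-14 + 3 * a + b) * 2 := by linear_combination h.ab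
    rw [this]; exact Q.mul_mem_left _ hq
  have hb : b * (b - 1) ∈ Q := by
    have : b * (b - 1) = (29 - 2 * a - 4 * b) * 2 := by linear_combination h.bb
    rw [this]; exact Q.mul_mem_left _ hq
  rcases hQ.mem_or_mem ha with ha' | ha'
  · rcases hQ.mem_or_mem hb with hb' | hb'
    · left; exact h.eqP h1 hQ hq (by simpa using ha') (by simpa using hb')
    · right; left; exact h.eqP h2 hQ hq (by simpa using ha') (by simpa using hb')
  · rcases hQ.mem_or_mem hab with hb' | hb'
    · exfalso; apply hQ.ne_top; rw [eq_top_iff_one]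
      have := Q.sub_mem hb' ha'
      simpa using this
    · right; right; exact h.eqP h3 hQ hq (by simpa using ha') (by simpa using hb')

/-- if `c` has norm `± 4` and `P` is the only prime above 2 containing it then `(c) = P ^ 2` -/
lemma Dat.sqP (h : Dat K a b) {P : Ideal (𝓞 K)} (hp : absNorm P = 2) (c : 𝓞 K) (hc : c ∈ P)
    (hn : (Algebra.norm ℤ c).natAbs = 4)
    (hu : ∀ Q : Ideal (𝓞 K), Q.IsPrime → (2 : 𝓞 K) ∈ Q → c ∈ Q → Q = P) : span {c} = P * P := by
  obtain ⟨J, hJ⟩ := dvd_iff_le.mpr ((span_singleton_le_iff_mem P).mpr hc)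
  have h1 := congrArg absNorm hJ
  rw [absNorm_span_singleton, hn, map_mul, hp] at h1
  have h2 : absNorm J = 2 := by omega
  have hJp : J.IsPrime := isPrime_of_irreducible_absNorm (by rw [h2]; exact Nat.prime_two)
  have h3 : (2 : 𝓞 K) ∈ J := by
    have := absNorm_mem J
    rw [h2] at this; exact_mod_cast this
  have h4 : c ∈ J := by
    have : c ∈ span {c} := mem_span_singleton_self c
    rw [hJ] at this
    exact (Ideal.mul_le_right : P * J ≤ J) this
  rw [hJ, hu J hJp h3 h4]

lemma nonpr {P : Ideal (𝓞 K)} (h0 : P ≠ ⊥) (c : 𝓞 K) (hs : span {c} = P * P)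
    (hc : ∀ (u : (𝓞 K)ˣ) (d : 𝓞 K), c ≠ u * d ^ 2) : cls P ≠ 1 := by
  intro h1
  obtain ⟨x, rfl⟩ := cls_eq_one h0 h1
  rw [span_singleton_mul_span_singleton, span_singleton_eq_span_singleton] at hs
  obtain ⟨u, hu⟩ := hs
  refine hc u⁻¹ x ?_
  rw [pow_two, ← hu, mul_comm, mul_assoc]; simp

lemma sqone {P : Ideal (𝓞 K)} (h0 : P ≠ ⊥) (c : 𝓞 K) (hs : span {c} = P * P) : cls P * cls P = 1 := by
  rw [← cls_mul h0 h0, ← hs, cls_span]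

theorem Dat.main [IsGalois ℚ K] (h : Dat K a b) : NumberField.classNumber K = 4 ∧
    Nonempty (ClassGroup (𝓞 K) ≃* Multiplicative (ZMod 2 × ZMod 2)) := by
  obtain ⟨P1, h1⟩ := h.exTwo 0 0 (by decide) (by decide) (by decide)
  obtain ⟨P2, h2⟩ := h.exTwo 0 1 (by decide) (by decide) (by decide)
  obtain ⟨P3, h3⟩ := h.exTwo 1 0 (by decide) (by decide) (by decide)
  have m1 := h1.pr.isMaximal h1.ne
  have m2 := h2.pr.isMaximal h2.ne
  have m3 := h3.pr.isMaximal h3.ne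
  have c3 : a - 3 = ((-3 : ℤ) : 𝓞 K) + (1 : ℤ) * a + (0 : ℤ) * b := by push_cast; ring
  have c2 : b - 3 = ((-3 : ℤ) : 𝓞 K) + (0 : ℤ) * a + (1 : ℤ) * b := by push_cast; ring
  have c1 : (-1 - a - b) - 3 = ((-4 : ℤ) : 𝓞 K) + (-1 : ℤ) * a + (-1 : ℤ) * b := by push_cast; ring
  have s3 : span {a - 3} = P3 * P3 := by
    refine h.sqP h3.nm _ ?_ ?_ ?_
    · rw [c3, h3.mem]; norm_num
    · rw [h.nm c3, Matrix.det_fin_three]; simp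
    · intro Q hQ hq hc
      rcases h.cases h1 h2 h3 hQ hq with rfl | rfl | rfl
      · rw [c3, h1.mem] at hc; norm_num at hc
      · rw [c3, h2.mem] at hc; norm_num at hc
      · rfl
  have s2 : span {b - 3} = P2 * P2 := by
    refine h.sqP h2.nm _ ?_ ?_ ?_
    · rw [c2, h2.mem]; norm_num
    · rw [h.nm c2, Matrix.det_fin_three]; simp
    · intro Q hQ hq hc
      rcases h.cases h1 h2 h3 hQ hq with rfl | rfl | rfl
      · rw [c2, h1.mem] at hc; norm_num at hc
      · rfl
      · rw [c2, h3.mem] at hc; norm_num at hc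
  have s1 : span {(-1 - a - b) - 3} = P1 * P1 := by
    refine h.sqP h1.nm _ ?_ ?_ ?_
    · rw [c1, h1.mem]; norm_num
    · rw [h.nm c1, Matrix.det_fin_three]; simp
    · intro Q hQ hq hc
      rcases h.cases h1 h2 h3 hQ hq with rfl | rfl | rfl
      · rfl
      · rw [c1, h2.mem] at hc; norm_num at hc
      · rw [c1, h3.mem] at hc; norm_num at hc
  have n1 := nonpr h1.ne _ s1 (h.rot.rot.gamma)
  have n2 := nonpr h2.ne _ s2 (h.rot.gamma)
  have n3 := nonpr h3.ne _ s3 (h.gamma)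
  have q1 := sqone h1.ne _ s1
  have q2 := sqone h2.ne _ s2
  have q3 := sqone h3.ne _ s3
  have m12 : P1 ≠ P2 := by
    rintro rfl
    have := (h1.mem 0 0 1).mpr (by norm_num)
    rw [h2.mem] at this; norm_num at this
  have m13 : P1 ≠ P3 := by
    rintro rfl
    have := (h1.mem 0 1 0).mpr (by norm_num)
    rw [h3.mem] at this; norm_num at this
  have m23 : P2 ≠ P3 := by
    rintro rfl
    have := (h2.mem 0 1 0).mpr (by norm_num)
    rw [h3.mem] at this; norm_num at this
  have hprod : P1 * P2 * P3 = span {2} := by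
    rw [mul_eq_inf_of_isCoprime (IsCoprime.mul_left (isCoprime_of_isMaximal m13) (isCoprime_of_isMaximal m23)),
      mul_eq_inf_of_isCoprime (isCoprime_of_isMaximal m12)]
    apply le_antisymm
    · rintro x ⟨⟨x1, x2⟩, x3⟩
      obtain ⟨x, y, z, rfl⟩ := h.coord x
      have y1 := (h1.mem x y z).mp x1
      have y2 := (h2.mem x y z).mp x2
      have y3 := (h3.mem x y z).mp x3
      obtain ⟨x', rfl⟩ : (2 : ℤ) ∣ x := by omega
      obtain ⟨y', rfl⟩ : (2 : ℤ) ∣ y := by omega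
      obtain ⟨z', rfl⟩ : (2 : ℤ) ∣ z := by omega
      rw [mem_span_singleton]
      exact ⟨x' + y' * a + z' * b, by push_cast; ring⟩
    · rw [span_singleton_le_iff_mem]
      exact ⟨⟨h1.two, h2.two⟩, h3.two⟩
  have hx : cls P1 * cls P2 * cls P3 = 1 := by
    rw [← cls_mul h1.ne h2.ne, ← cls_mul (mul_ne_zero h1.ne h2.ne) h3.ne, hprod, cls_span]
  generalize hx1 : cls P1 = x1 at *
  generalize hx2 : cls P2 = x2 at *
  generalize hx3 : cls P3 = x3 at *
  have e3 : x1 * x2 = x3 := by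
    rw [mul_eq_one_iff_eq_inv] at hx; rw [hx]; exact (eq_inv_of_mul_eq_one_left q3).symm
  have d12 : x1 ≠ x2 := by
    rintro rfl; exact n3 (by rw [← e3, q1])
  have d13 : x1 ≠ x3 := by
    rintro rfl; exact n2 (by simpa using e3)
  have d23 : x2 ≠ x3 := by
    rintro rfl; exact n1 (by simpa using e3)
  let H : Subgroup (ClassGroup (𝓞 K)) :=
    { carrier := {1, x1, x2, x3}
      one_mem' := by simp
      mul_mem' := by
        have e13 : x1 * x3 = x2 := by rw [← e3, ← mul_assoc, q1, one_mul]
        have e23 : x2 * x3 = x1 := by rw [← e3, mul_comm x1, ← mul_assoc, q2, one_mul]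
        rintro x y (rfl | rfl | rfl | rfl) (rfl | rfl | rfl | rfl) <;>
          simp_all [mul_comm]
      inv_mem' := by
        rintro x (rfl | rfl | rfl | rfl)
        · simp
        · rw [← eq_inv_of_mul_eq_one_left q1]; simp
        · rw [← eq_inv_of_mul_eq_one_left q2]; simp
        · rw [← eq_inv_of_mul_eq_one_left q3]; simp }
  have hH : IsTwo H := by
    intro Q hQ hQ0 hq
    rcases h.cases h1 h2 h3 hQ hq with rfl | rfl | rfl
    · rw [hx1]; change x1 ∈ ({1, x1, x2, x3} : Set _); simp
    · rw [hx2]; change x2 ∈ ({1, x1, x2, x3} : Set _); simp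
    · rw [hx3]; change x3 ∈ ({1, x1, x2, x3} : Set _); simp
  have hall : ∀ x : ClassGroup (𝓞 K), x ∈ ({1, x1, x2, x3} : Set (ClassGroup (𝓞 K))) := fun x => h.top hH x
  have hcard : Nat.card (ClassGroup (𝓞 K)) = 4 := by
    classical
    have : (Set.univ : Set (ClassGroup (𝓞 K))) = (({1, x1, x2, x3} : Finset (ClassGroup (𝓞 K))) : Set _) := by
      ext x; simpa using hall x
    rw [← Set.ncard_univ, this, Set.ncard_coe_finset]
    rw [Finset.card_insert_of_notMem, Finset.card_insert_of_notMem, Finset.card_insert_of_notMem, Finset.card_singleton]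
    · simpa using d23
    · simp [d12, d13]
    · simp [n1.symm, n2.symm, n3.symm]
  have hk : IsKleinFour (ClassGroup (𝓞 K)) := by
    refine ⟨hcard, ?_⟩
    refine (Nat.prime_two.eq_one_or_self_of_dvd _ (Monoid.exponent_dvd_of_forall_pow_eq_one ?_)).resolve_left ?_
    · intro x
      rw [pow_two]
      rcases hall x with rfl | rfl | rfl | rfl
      · simp
      · exact q1
      · exact q2
      · exact q3
    · rw [Monoid.exp_eq_one_iff]
      intro hs
      exact n1 (Subsingleton.elim _ _)
  refine ⟨?_, IsKleinFour.nonempty_mulEquiv⟩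
  rw [NumberField.classNumber, ← Nat.card_eq_fintype_card, hcard]

end C277

namespace C277
open NumberField Polynomial Module


instance fp : Fact (Nat.Prime 277) := ⟨by norm_num⟩

def CC : Finset (ZMod 277) := Finset.univ.filter (fun t => t ^ 92 = 1)

lemma mem_CC {t : ZMod 277} : t ∈ CC ↔ t ^ 92 = 1 := by simp [CC]

set_option linter.unusedSectionVars false

variable {F : Type*} [Field F] [CharZero F] (e : AddChar (ZMod 277) F)

noncomputable def et (c : ZMod 277) : F := ∑ t ∈ CC, e (c * t)

lemma ne_zero_of_CC {u : ZMod 277} (hu : u ∈ CC) : u ≠ 0 := by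
  rintro rfl; rw [mem_CC] at hu; simp at hu

lemma sum_CC {u : ZMod 277} (hu : u ∈ CC) (f : ZMod 277 → F) : ∑ t ∈ CC, f (u * t) = ∑ t ∈ CC, f t := by
  have h0 := ne_zero_of_CC hu
  refine Finset.sum_bij' (fun t _ => u * t) (fun t _ => u⁻¹ * t) ?_ ?_ ?_ ?_ ?_
  · intro t ht; rw [mem_CC] at *; rw [mul_pow, hu, ht, one_mul]
  · intro t ht; rw [mem_CC] at *; rw [mul_pow, inv_pow, hu, ht, inv_one, one_mul]
  · intro t _; field_simp
  · intro t _; field_simp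
  · intro t _; rfl

lemma et_mul_left {u : ZMod 277} (hu : u ∈ CC) (x : ZMod 277) : et e (u * x) = et e x := by
  unfold et
  rw [← sum_CC hu (fun t => e (x * t))]
  exact Finset.sum_congr rfl fun t _ => by congr 1; ring

lemma et_mul (c d : ZMod 277) : et e c * et e d = ∑ t ∈ CC, et e (c + d * t) := by
  unfold et
  rw [Finset.sum_mul_sum]
  conv_rhs => rw [Finset.sum_comm]
  refine Finset.sum_congr rfl fun s hs => ?_
  rw [← sum_CC hs]
  refine Finset.sum_congr rfl fun t _ => ?_
  rw [← AddChar.map_add_eq_mul]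
  congr 1; ring

noncomputable def gg (y : ZMod 277) : F :=
  if y = 0 then 92 else if y = 1 then et e 1 else if y = 116 then et e 5 else et e 25

lemma cast_eq (m k : ℕ) : ((m : ZMod 277) = (k : ZMod 277)) ↔ (m % 277 == k % 277) = true := by
  rw [ZMod.natCast_eq_natCast_iff', beq_iff_eq]

lemma cnt (P : ZMod 277 → Prop) [DecidablePred P] (Q : ℕ → Bool) (h : ∀ n : ℕ, P n ↔ Q n = true) :
    (Finset.univ.filter P).card = ((Finset.range 277).filter (fun n => Q n = true)).card := by
  symm
  refine Finset.card_bij (fun n _ => (n : ZMod 277)) ?_ ?_ ?_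
  · intro n hn
    simp only [Finset.mem_filter, Finset.mem_univ, true_and] at *
    exact (h n).mpr hn.2
  · intro n hn m hm hnm
    simp only [Finset.mem_filter, Finset.mem_range] at *
    rw [ZMod.natCast_eq_natCast_iff'] at hnm
    rwa [Nat.mod_eq_of_lt hn.1, Nat.mod_eq_of_lt hm.1] at hnm
  · intro x hx
    simp only [Finset.mem_filter, Finset.mem_univ, true_and] at hx
    refine ⟨x.val, ?_, ZMod.natCast_zmod_val x⟩
    simp only [Finset.mem_filter, Finset.mem_range]
    exact ⟨x.val_lt, (h _).mp (by rwa [ZMod.natCast_zmod_val])⟩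

lemma card_CC : CC.card = 92 := by
  rw [CC, cnt _ (fun n => n ^ 92 % 277 == 1 % 277)]
  · decide +kernel
  · intro n; rw [← cast_eq]; push_cast; rfl

lemma cntU (k r : ℕ) (h : ((Finset.range 277).filter (fun n => (n ^ 92 % 277 == k % 277) = true)).card = r) :
    ((Finset.univ : Finset (ZMod 277)).filter (fun t => id t ^ 92 = (k : ZMod 277))).card = r := by
  rw [cnt _ (fun n => n ^ 92 % 277 == k % 277), h]
  intro n; rw [← cast_eq]; push_cast; rfl

lemma cntC (c d k r : ℕ) (h : ((Finset.range 277).filter (fun n => (n ^ 92 % 277 == 1 % 277 &&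
      (c + d * n) ^ 92 % 277 == k % 277) = true)).card = r) :
    (CC.filter (fun t => ((c : ZMod 277) + (d : ZMod 277) * t) ^ 92 = (k : ZMod 277))).card = r := by
  rw [CC, Finset.filter_filter, cnt _ (fun n => n ^ 92 % 277 == 1 % 277 && (c + d * n) ^ 92 % 277 == k % 277), h]
  intro n; rw [Bool.and_eq_true, ← cast_eq, ← cast_eq]; push_cast; rfl

lemma et_zero : et e 0 = 92 := by
  simp [et, card_CC]

def S : Finset (ZMod 277) := {0, 1, 116, 160}

lemma pow_S (x : ZMod 277) : x ^ 92 ∈ S := by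
  have h : ∀ n < 277, (n ^ 92 % 277 == 0 % 277 || n ^ 92 % 277 == 1 % 277 ||
    n ^ 92 % 277 == 116 % 277 || n ^ 92 % 277 == 160 % 277) = true := by decide +kernel
  have h1 := h x.val x.val_lt
  rw [Bool.or_eq_true, Bool.or_eq_true, Bool.or_eq_true, ← cast_eq, ← cast_eq, ← cast_eq, ← cast_eq] at h1
  simp only [Nat.cast_pow, Nat.cast_ofNat, Nat.cast_zero, Nat.cast_one, ZMod.natCast_zmod_val] at h1
  simp only [S, Finset.mem_insert, Finset.mem_singleton]
  generalize x ^ 92 = y at h1 ⊢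
  rcases h1 with ((h1 | h1) | h1) | h1
  · exact Or.inl h1
  · exact Or.inr (Or.inl h1)
  · exact Or.inr (Or.inr (Or.inl h1))
  · exact Or.inr (Or.inr (Or.inr h1))

lemma et_of {x y : ZMod 277} (hy : y ≠ 0) (h : x ^ 92 = y ^ 92) : et e x = et e y := by
  have : x / y ∈ CC := by
    rw [mem_CC, div_pow, h, div_self (pow_ne_zero _ hy)]
  rw [← et_mul_left e this y, div_mul_cancel₀ _ hy]

lemma pw5 : (116 : ZMod 277) = 5 ^ 92 := by
  have := (cast_eq 116 (5 ^ 92)).mpr (by decide +kernel)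
  rwa [Nat.cast_pow, Nat.cast_ofNat, Nat.cast_ofNat] at this

lemma pw25 : (160 : ZMod 277) = 25 ^ 92 := by
  have := (cast_eq 160 (25 ^ 92)).mpr (by decide +kernel)
  rwa [Nat.cast_pow, Nat.cast_ofNat, Nat.cast_ofNat] at this

lemma et_eq (x : ZMod 277) : et e x = gg e (x ^ 92) := by
  have h := pow_S x
  simp only [S, Finset.mem_insert, Finset.mem_singleton] at h
  rcases h with h | h | h | h
  · have : x = 0 := by simpa using h
    subst this; simp [et_zero, gg]
  · rw [et_of e (y := 1) (by decide) (by rw [h, one_pow]), h]; simp [gg]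
  · rw [et_of e (y := 5) (by decide) (by rw [h]; exact pw5), h]
    rw [gg, if_neg (by decide), if_neg (by decide), if_pos rfl]
  · rw [et_of e (y := 25) (by decide) (by rw [h]; exact pw25), h]
    rw [gg, if_neg (by decide), if_neg (by decide), if_neg (by decide)]

lemma sum_et (T : Finset (ZMod 277)) (f : ZMod 277 → ZMod 277) (z n0 n1 n2 : ℕ)
    (hz : (T.filter fun t => f t ^ 92 = 0).card = z)
    (h0 : (T.filter fun t => f t ^ 92 = 1).card = n0)
    (h1 : (T.filter fun t => f t ^ 92 = 116).card = n1)
    (h2 : (T.filter fun t => f t ^ 92 = 160).card = n2) :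
    ∑ t ∈ T, et e (f t) = z * 92 + n0 * et e 1 + n1 * et e 5 + n2 * et e 25 := by
  simp_rw [et_eq e (f _)]
  rw [← Finset.sum_fiberwise_of_maps_to' (t := S) (g := fun t => f t ^ 92) (fun t _ => pow_S _) (gg e)]
  simp only [Finset.sum_const, nsmul_eq_mul]
  rw [S, Finset.sum_insert (by decide), Finset.sum_insert (by decide), Finset.sum_insert (by decide),
    Finset.sum_singleton, hz, h0, h1, h2]
  have g1 : gg e 0 = 92 := by simp [gg]
  have g2 : gg e 1 = et e 1 := by simp [gg]
  have g3 : gg e 116 = et e 5 := by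
    rw [gg, if_neg (by decide), if_neg (by decide), if_pos rfl]
  have g4 : gg e 160 = et e 25 := by
    rw [gg, if_neg (by decide), if_neg (by decide), if_neg (by decide)]
  rw [g1, g2, g3, g4]; ring

lemma et_sum (he : e ≠ 1) : et e 1 + et e 5 + et e 25 = -1 := by
  have h1 := sum_et e Finset.univ id 1 92 92 92
    (by simpa only [Nat.cast_ofNat, Nat.cast_one, Nat.cast_zero] using cntU 0 _ (by decide +kernel))
    (by simpa only [Nat.cast_ofNat, Nat.cast_one, Nat.cast_zero] using cntU 1 _ (by decide +kernel))
    (by simpa only [Nat.cast_ofNat, Nat.cast_one, Nat.cast_zero] using cntU 116 _ (by decide +kernel))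
    (by simpa only [Nat.cast_ofNat, Nat.cast_one, Nat.cast_zero] using cntU 160 _ (by decide +kernel))
  have h2 : ∑ t : ZMod 277, et e (id t) = 0 := by
    unfold et
    rw [Finset.sum_comm]
    refine Finset.sum_eq_zero fun t ht => ?_
    have h0 := ne_zero_of_CC ht
    rw [← AddChar.sum_eq_zero_of_ne_one he]
    exact Fintype.sum_equiv (Equiv.mulRight₀ t h0) _ _ (fun x => rfl)
  rw [h2] at h1
  push_cast at h1
  have : (92 : F) ≠ 0 := by norm_num
  apply mul_left_cancel₀ this
  linear_combination -h1

lemma r_aa (he : e ≠ 1) : et e 1 * et e 1 = 62 - 3 * et e 1 + 4 * et e 5 := by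
  rw [et_mul, sum_et e CC (fun t => 1 + 1 * t) 1 27 34 30
    (by simpa only [Nat.cast_ofNat, Nat.cast_one, Nat.cast_zero] using cntC 1 1 0 _ (by decide +kernel))
    (by simpa only [Nat.cast_ofNat, Nat.cast_one, Nat.cast_zero] using cntC 1 1 1 _ (by decide +kernel))
    (by simpa only [Nat.cast_ofNat, Nat.cast_one, Nat.cast_zero] using cntC 1 1 116 _ (by decide +kernel))
    (by simpa only [Nat.cast_ofNat, Nat.cast_one, Nat.cast_zero] using cntC 1 1 160 _ (by decide +kernel))]
  push_cast
  linear_combination 30 * et_sum e he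

lemma r_ab (he : e ≠ 1) : et e 1 * et e 5 = -28 + 6 * et e 1 + 2 * et e 5 := by
  rw [et_mul, sum_et e CC (fun t => 1 + 5 * t) 0 34 30 28
    (by simpa only [Nat.cast_ofNat, Nat.cast_one, Nat.cast_zero] using cntC 1 5 0 _ (by decide +kernel))
    (by simpa only [Nat.cast_ofNat, Nat.cast_one, Nat.cast_zero] using cntC 1 5 1 _ (by decide +kernel))
    (by simpa only [Nat.cast_ofNat, Nat.cast_one, Nat.cast_zero] using cntC 1 5 116 _ (by decide +kernel))
    (by simpa only [Nat.cast_ofNat, Nat.cast_one, Nat.cast_zero] using cntC 1 5 160 _ (by decide +kernel))]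
  push_cast
  linear_combination 28 * et_sum e he

lemma r_bb (he : e ≠ 1) : et e 5 * et e 5 = 58 - 4 * et e 1 - 7 * et e 5 := by
  rw [et_mul, sum_et e CC (fun t => 5 + 5 * t) 1 30 27 34
    (by simpa only [Nat.cast_ofNat, Nat.cast_one, Nat.cast_zero] using cntC 5 5 0 _ (by decide +kernel))
    (by simpa only [Nat.cast_ofNat, Nat.cast_one, Nat.cast_zero] using cntC 5 5 1 _ (by decide +kernel))
    (by simpa only [Nat.cast_ofNat, Nat.cast_one, Nat.cast_zero] using cntC 5 5 116 _ (by decide +kernel))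
    (by simpa only [Nat.cast_ofNat, Nat.cast_one, Nat.cast_zero] using cntC 5 5 160 _ (by decide +kernel))]
  push_cast
  linear_combination 34 * et_sum e he


variable {e} {zt : F}

lemma et_int (hzt : IsPrimitiveRoot zt 277) (he : ∀ x, e x = zt ^ x.val) (c : ZMod 277) : IsIntegral ℤ (et e c) := by
  refine IsIntegral.sum _ fun t _ => ?_
  rw [he]
  exact (hzt.isIntegral (by norm_num)).pow _

lemma et_fix (hzt : IsPrimitiveRoot zt 277) (he : ∀ x, e x = zt ^ x.val)
    (s : F ≃ₐ[ℚ] F) (hs : s ^ 92 = 1) (c : ZMod 277) : s (et e c) = et e c := by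
  let u := hzt.autToPow ℚ s
  have hu : (u : ZMod 277) ∈ CC := by
    rw [mem_CC, ← Units.val_pow_eq_pow_val, ← map_pow, hs, map_one]; rfl
  have h1 : s zt = e u := by
    rw [he]; exact (hzt.autToPow_spec ℚ s).symm
  have h2 : ∀ x, s (e x) = e (u * x) := by
    intro x
    conv_lhs => rw [he]
    rw [map_pow, h1, ← AddChar.map_nsmul_eq_pow]
    congr 1
    rw [nsmul_eq_mul, ZMod.natCast_zmod_val, mul_comm]
  refine Eq.trans ?_ (et_mul_left e hu c)
  unfold et
  rw [map_sum]
  exact Finset.sum_congr rfl fun t _ => by rw [h2, mul_assoc]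

lemma et_mem [IsGalois ℚ F] [FiniteDimensional ℚ F] (hf : finrank ℚ F = 276)
    (hzt : IsPrimitiveRoot zt 277) (he : ∀ x, e x = zt ^ x.val)
    (L : IntermediateField ℚ F) (hL : finrank ℚ L = 3) (c : ZMod 277) : et e c ∈ L := by
  rw [← IsGalois.fixedField_fixingSubgroup L]
  rw [IntermediateField.mem_fixedField_iff]
  intro s hs
  apply et_fix hzt he
  have h1 := IsGalois.card_fixingSubgroup_eq_finrank L
  have h2 := finrank_mul_finrank ℚ L F
  rw [hL, hf] at h2
  have h3 : Nat.card L.fixingSubgroup = 92 := by rw [h1]; omega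
  have h4 := pow_card_eq_one' (x := (⟨s, hs⟩ : L.fixingSubgroup))
  rw [h3] at h4
  have h5 := congrArg Subtype.val h4
  rwa [SubmonoidClass.coe_pow, OneMemClass.coe_one] at h5

lemma mkDat {F : Type*} [Field F] [NumberField F] (L : IntermediateField ℚ F) (hL : finrank ℚ L = 3)
    {x y : F} (ix : IsIntegral ℤ x) (iy : IsIntegral ℤ y) (hx : x ∈ L) (hy : y ∈ L)
    (h1 : x * x = 62 - 3 * x + 4 * y) (h2 : x * y = -28 + 6 * x + 2 * y) (h3 : y * y = 58 - 4 * x - 7 * y) :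
    ∃ a b : 𝓞 L, Dat L a b := by
  have jx : IsIntegral ℤ (⟨x, hx⟩ : L) := by
    rw [← isIntegral_algHom_iff ((L.val).restrictScalars ℤ) (L.val.injective)]
    exact ix
  have jy : IsIntegral ℤ (⟨y, hy⟩ : L) := by
    rw [← isIntegral_algHom_iff ((L.val).restrictScalars ℤ) (L.val.injective)]
    exact iy
  refine ⟨⟨_, jx⟩, ⟨_, jy⟩, hL, ?_, ?_, ?_⟩
  · apply RingOfIntegers.ext; apply Subtype.ext; exact h1
  · apply RingOfIntegers.ext; apply Subtype.ext; exact h2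
  · apply RingOfIntegers.ext; apply Subtype.ext; exact h3

theorem fin1 {F : Type*} [Field F] [NumberField F] [hcy : IsCyclotomicExtension {277} ℚ F]
    (L : IntermediateField ℚ F) (hL : finrank ℚ L = 3) :
    NumberField.classNumber L = 4 ∧
    Nonempty (ClassGroup (NumberField.RingOfIntegers L) ≃*
      Multiplicative (ZMod 2 × ZMod 2)) := by
  have : IsAbelianGalois ℚ F := IsCyclotomicExtension.isAbelianGalois {277} ℚ F
  have hg : IsGalois ℚ L := (IsAbelianGalois.tower_bot ℚ L F).toIsGalois
  have hgF : IsGalois ℚ F := inferInstance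
  have finF : finrank ℚ F = 276 := by
    rw [IsCyclotomicExtension.finrank (n := 277) F (cyclotomic.irreducible_rat (by norm_num))]
    rw [Nat.totient_prime fp.out]
  obtain ⟨zt, hzt⟩ : ∃ zt : F, IsPrimitiveRoot zt 277 := ⟨_, IsCyclotomicExtension.zeta_spec 277 ℚ F⟩
  obtain ⟨e, he⟩ : ∃ e : AddChar (ZMod 277) F, ∀ x, e x = zt ^ x.val :=
    ⟨AddChar.zmodChar 277 hzt.pow_eq_one, AddChar.zmodChar_apply _⟩
  have hne : e ≠ 1 := by
    intro h
    have h1 : e 1 = 1 := by rw [h]; rfl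
    rw [he] at h1
    have : (1 : ZMod 277).val = 1 := by decide
    rw [this, pow_one] at h1
    exact hzt.ne_one (by norm_num) h1
  have hm := et_mem finF hzt he L hL
  exact (mkDat L hL (et_int hzt he 1) (et_int hzt he 5) (hm 1) (hm 5) (r_aa e hne) (r_ab e hne) (r_bb e hne)).elim
    fun a ⟨b, h⟩ => h.main

lemma cyc : IsCyclotomicExtension {277} ℚ (CyclotomicField 277 ℚ) := by
  have h := CyclotomicField.isCyclotomicExtension 277 ℚ
  have hs : (CyclotomicField.algebra 277 ℚ) = (DivisionRing.toRatAlgebra : Algebra ℚ (CyclotomicField 277 ℚ)) :=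
    Subsingleton.elim _ _
  rw [hs] at h
  exact h

theorem final (L : IntermediateField ℚ (CyclotomicField 277 ℚ)) (hL : finrank ℚ L = 3) :
    NumberField.classNumber L = 4 ∧
    Nonempty (ClassGroup (NumberField.RingOfIntegers L) ≃*
      Multiplicative (ZMod 2 × ZMod 2)) := by
  have := cyc
  have : NumberField (CyclotomicField 277 ℚ) := IsCyclotomicExtension.numberField {277} ℚ _
  exact fin1 L hL

end C277

/-- Let `ℓ = 277` and let `L` be the unique degree-3 intermediate field of `ℚ(ζ_ℓ)/ℚ`.
Then the class number of `L` is `4` and the ideal class group of `L` is isomorphic to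
`(ℤ/2ℤ) × (ℤ/2ℤ)`. -/
theorem classGroup_of_cubic_subfield_277
    (L : IntermediateField ℚ (CyclotomicField 277 ℚ)) (hL : Module.finrank ℚ L = 3) :
    NumberField.classNumber L = 4 ∧
    Nonempty (ClassGroup (NumberField.RingOfIntegers L) ≃*
      Multiplicative (ZMod 2 × ZMod 2)) := by
  exact C277.final L hL
end

section
/- Let ℓ = 349 and let L be the unique degree-3 intermediate field of ℚ(ζ_ℓ)/ℚ. Then the class number of L is 4, and the ideal class group of L is isomorphic to (ℤ/2ℤ) × (ℤ/2ℤ). -/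
namespace C349
open NumberField Polynomial Module
set_option linter.all false
variable {K : Type*} [Field K] [NumberField K]

noncomputable def fZ : ℤ[X] := X^3 - C 17 * X^2 - C 20 * X - C 1
noncomputable def fQ : ℚ[X] := X^3 - C 17 * X^2 - C 20 * X - C 1

lemma fZ_monic : fZ.Monic := by unfold fZ; monicity!
lemma fZ_deg : fZ.natDegree = 3 := by unfold fZ; compute_degree!
lemma fQ_monic : fQ.Monic := by unfold fQ; monicity!
lemma fQ_deg : fQ.natDegree = 3 := by unfold fQ; compute_degree!
lemma fQ_eq : fQ = fZ.map (Int.castRingHom ℚ) := by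
  simp only [fQ, fZ, Polynomial.map_sub, Polynomial.map_mul, Polynomial.map_pow, Polynomial.map_X, Polynomial.map_C]
  norm_num

lemma fQ_irr : Irreducible fQ := by
  rw [fQ_eq, ← algebraMap_int_eq, ← Polynomial.Monic.irreducible_iff_irreducible_map_fraction_map fZ_monic]
  have h2 : (fZ.map (Int.castRingHom (ZMod 2))).Monic := fZ_monic.map _
  refine Polynomial.Monic.irreducible_of_irreducible_map (Int.castRingHom (ZMod 2)) _ fZ_monic ?_
  have hd : (fZ.map (Int.castRingHom (ZMod 2))).natDegree = 3 := by
    rw [fZ_monic.natDegree_map, fZ_deg]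
  rw [Polynomial.irreducible_iff_roots_eq_zero_of_degree_le_three (by omega) (by omega)]
  rw [Multiset.eq_zero_iff_forall_notMem]
  intro a ha
  rw [Polynomial.mem_roots h2.ne_zero] at ha
  revert ha
  simp [fZ, Polynomial.IsRoot]
  revert a
  decide

lemma minpoly_rho (ρ : K) (h : ρ^3 - 17*ρ^2 - 20*ρ - 1 = 0) : minpoly ℚ ρ = fQ := by
  symm
  apply minpoly.eq_of_irreducible_of_monic fQ_irr _ fQ_monic
  simp [fQ, h]

/-- power basis over ℚ -/
lemma exists_basis (h3 : finrank ℚ K = 3) (ρ : K) (h : ρ^3 - 17*ρ^2 - 20*ρ - 1 = 0) :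
    ∃ b : Basis (Fin 3) ℚ K, ∀ i, b i = ρ ^ (i : ℕ) := by
  have hli : LinearIndependent ℚ (fun i : Fin 3 => ρ ^ (i:ℕ)) := by
    have := linearIndependent_pow (K := ℚ) ρ
    rw [minpoly_rho ρ h, fQ_deg] at this
    exact this
  refine ⟨basisOfLinearIndependentOfCardEqFinrank hli (by simp [h3]), fun i => by simp⟩

lemma leftMul {R S : Type*} [CommRing R] [CommRing S] [Algebra R S]
    (b : Basis (Fin 3) R S) (ρ : S) (hb : ∀ i, b i = ρ ^ (i:ℕ))
    (h : ρ^3 - 17*ρ^2 - 20*ρ - 1 = 0) :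
    Algebra.leftMulMatrix b ρ = !![0,0,1;1,0,20;0,1,17] := by
  have h0 := hb 0
  have h1 := hb 1
  have h2 := hb 2
  simp at h0 h1 h2
  ext i j
  rw [Algebra.leftMulMatrix_eq_repr_mul]
  fin_cases j
  · have : ρ * b 0 = b 1 := by rw [h0, h1]; ring
    simp only [Fin.zero_eta, this, Basis.repr_self]
    fin_cases i <;> simp
  · have : ρ * b 1 = b 2 := by rw [h2, h1]; ring
    simp only [Fin.mk_one, this, Basis.repr_self]
    fin_cases i <;> simp
  · have : ρ * b 2 = b 0 + (20:R) • b 1 + (17:R) • b 2 := by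
      rw [h2, h1, h0, Algebra.smul_def, Algebra.smul_def]
      simp only [map_ofNat]
      linear_combination h
    simp only [Fin.reduceFinMk, this, map_add, map_smul, Basis.repr_self]
    fin_cases i <;> simp

lemma discr_rho (b : Basis (Fin 3) ℚ K) (ρ : K) (hb : ∀ i, b i = ρ ^ (i:ℕ))
    (h : ρ^3 - 17*ρ^2 - 20*ρ - 1 = 0) :
    Algebra.discr ℚ b = 349^2 := by
  have hl := leftMul b ρ hb h
  have ht : ∀ n : ℕ, Algebra.trace ℚ K (ρ^n) = ((!![0,0,1;1,0,20;0,1,17] : Matrix (Fin 3) (Fin 3) ℚ)^n).trace := by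
    intro n
    rw [Algebra.trace_eq_matrix_trace b, map_pow, hl]
  rw [Algebra.discr_def, Matrix.det_fin_three]
  simp only [Algebra.traceMatrix_apply, Algebra.traceForm_apply, hb, ← pow_add]
  simp only [ht]
  simp [pow_succ, Matrix.trace_fin_three, Matrix.mul_apply, Fin.sum_univ_three]
  norm_num

lemma exists_int_basis (h3 : finrank ℚ K = 3) (ρ : 𝓞 K) (h : ρ^3 - 17*ρ^2 - 20*ρ - 1 = 0) :
    ∃ b : Basis (Fin 3) ℤ (𝓞 K), ∀ i, b i = ρ ^ (i : ℕ) := by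
  have h' : (ρ:K)^3 - 17*(ρ:K)^2 - 20*(ρ:K) - 1 = 0 := by
    have := congrArg (algebraMap (𝓞 K) K) h
    simpa [map_ofNat (algebraMap (𝓞 K) K)] using this
  obtain ⟨bQ, hbQ⟩ := exists_basis h3 (ρ:K) h'
  have hd := discr_rho bQ ρ hbQ h'
  have hcard : Fintype.card (Module.Free.ChooseBasisIndex ℤ (𝓞 K)) = 3 := by
    rw [← Module.finrank_eq_card_chooseBasisIndex, RingOfIntegers.rank, h3]
  let e : Basis (Fin 3) ℤ (𝓞 K) := (RingOfIntegers.basis K).reindex (Fintype.equivFinOfCardEq hcard)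
  let v : Fin 3 → 𝓞 K := fun i => ρ ^ (i:ℕ)
  have hv : Algebra.discr ℤ v = 349^2 := by
    have hc : ((Algebra.discr ℤ v : ℤ) : ℚ) = Algebra.discr ℚ bQ := by
      rw [Algebra.discr_def, Algebra.discr_def, ← eq_intCast (Int.castRingHom ℚ), RingHom.map_det]
      congr 1
      ext i j
      simp only [RingHom.mapMatrix_apply, Matrix.map_apply, Algebra.traceMatrix_apply,
        Algebra.traceForm_apply, hbQ, v]
      rw [eq_intCast, Algebra.coe_trace_int]
      simp
    rw [hd] at hc
    exact_mod_cast hc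
  have hP : Algebra.discr ℤ v = (e.toMatrix v).det ^ 2 * Algebra.discr ℤ e := by
    rw [← Algebra.discr_of_matrix_vecMul]
    congr 1
    exact (e.toMatrix_map_vecMul v).symm
  have he : Algebra.discr ℤ e = discr K := NumberField.discr_eq_discr K e
  have h2 := NumberField.abs_discr_gt_two (K := K) (by omega)
  rw [hv, he] at hP
  have hdet : IsUnit (e.toMatrix v).det := by
    set d := (e.toMatrix v).det
    have hdvd : d ∣ 349 := by
      rw [← Int.pow_dvd_pow_iff (n := 2) (by norm_num), hP]; exact dvd_mul_right _ _
    rcases (Int.natAbs_dvd_natAbs.mpr hdvd) |> (Nat.dvd_prime (by norm_num : Nat.Prime 349)).mp with h1 | h1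
    · exact Int.isUnit_iff_natAbs_eq.mpr h1
    · exfalso
      have : d^2 = 349^2 := by
        rw [← Int.natAbs_pow_two, h1]; norm_num
      rw [this] at hP
      have : discr K = 1 := by linarith
      rw [this] at h2
      norm_num at h2
  have hb := (Module.Basis.is_basis_iff_det e (v := v)).mpr (by rwa [Basis.det_apply])
  exact ⟨Basis.mk hb.1 hb.2.ge, fun i => by simp [v]⟩

lemma discr_eq (ρ : 𝓞 K) (h : ρ^3 - 17*ρ^2 - 20*ρ - 1 = 0)
    (b : Basis (Fin 3) ℤ (𝓞 K)) (hb : ∀ i, b i = ρ ^ (i : ℕ)) : discr K = 349^2 := by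
  rw [← NumberField.discr_eq_discr K b]
  have hl := leftMul b ρ hb h
  have ht : ∀ n : ℕ, Algebra.trace ℤ (𝓞 K) (ρ^n) = ((!![0,0,1;1,0,20;0,1,17] : Matrix (Fin 3) (Fin 3) ℤ)^n).trace := by
    intro n
    rw [Algebra.trace_eq_matrix_trace b, map_pow, hl]
  rw [Algebra.discr_def, Matrix.det_fin_three]
  simp only [Algebra.traceMatrix_apply, Algebra.traceForm_apply, hb, ← pow_add]
  simp only [ht]
  simp [pow_succ, Matrix.trace_fin_three]

lemma norm_lin (ρ : 𝓞 K) (h : ρ^3 - 17*ρ^2 - 20*ρ - 1 = 0)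
    (b : Basis (Fin 3) ℤ (𝓞 K)) (hb : ∀ i, b i = ρ ^ (i : ℕ)) (x y : ℤ) :
    Algebra.norm ℤ ((x : 𝓞 K) + y * ρ) = x^3 + 17*x^2*y - 20*x*y^2 + y^3 := by
  have hl := leftMul b ρ hb h
  rw [Algebra.norm_eq_matrix_det b, map_add, map_mul, hl]
  have : ∀ z : ℤ, Algebra.leftMulMatrix b (z : 𝓞 K) = Matrix.diagonal (fun _ => z) := by
    intro z
    rw [map_intCast]; rfl
  rw [this, this, Matrix.det_fin_three]
  simp [Matrix.diagonal, Matrix.mul_apply, Fin.sum_univ_three]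
  ring

/-- the structure we use : any ring hom is determined by image of `ρ`. -/
lemma hom_ext (ρ : 𝓞 K) (b : Basis (Fin 3) ℤ (𝓞 K)) (hb : ∀ i, b i = ρ ^ (i : ℕ))
    {S : Type*} [CommRing S] (f g : 𝓞 K →+* S) (hfg : f ρ = g ρ) : f = g := by
  have : f.toAddMonoidHom.toIntLinearMap = g.toAddMonoidHom.toIntLinearMap := by
    apply b.ext
    intro i
    simp [hb, hfg]
  ext x
  exact DFunLike.congr_fun this x

lemma exists_hom (ρ : 𝓞 K) (h : ρ^3 - 17*ρ^2 - 20*ρ - 1 = 0)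
    (b : Basis (Fin 3) ℤ (𝓞 K)) (hb : ∀ i, b i = ρ ^ (i : ℕ))
    {S : Type*} [CommRing S] (r : S) (hr : r^3 - 17*r^2 - 20*r - 1 = 0) :
    ∃ f : 𝓞 K →+* S, f ρ = r := by
  let pb : PowerBasis ℤ (𝓞 K) := ⟨ρ, 3, b, hb⟩
  have hm : minpoly ℤ ρ = fZ := by
    have hdvd : minpoly ℤ ρ ∣ fZ := by
      apply minpoly.isIntegrallyClosed_dvd (RingOfIntegers.isIntegral ρ)
      simp only [fZ, map_sub, map_mul, map_pow, aeval_X, aeval_C]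
      simpa using h
    have hd : (minpoly ℤ ρ).natDegree = 3 := pb.natDegree_minpoly
    exact (Polynomial.eq_of_monic_of_dvd_of_natDegree_le (minpoly.monic (RingOfIntegers.isIntegral ρ)) fZ_monic hdvd (by rw [hd, fZ_deg])).symm
  have hr' : aeval r fZ = 0 := by
    simp only [fZ, map_sub, map_mul, map_pow, aeval_X, aeval_C]
    simpa using hr
  refine ⟨(pb.lift r (by
    change aeval r (minpoly ℤ ρ) = 0
    rw [hm]; exact hr')).toRingHom, ?_⟩
  exact pb.lift_gen r _

structure Dat (K : Type*) [Field K] where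
  ρ : 𝓞 K
  h : ρ^3 - 17*ρ^2 - 20*ρ - 1 = 0
  b : Basis (Fin 3) ℤ (𝓞 K)
  hb : ∀ i, b i = ρ ^ (i : ℕ)

end C349

namespace C349
open NumberField Polynomial Module
set_option linter.all false
variable {K : Type*} [Field K] [NumberField K]

lemma norm_prime_hom {I : Ideal (𝓞 K)} {p : ℕ} (hp : p.Prime) (hI : Ideal.absNorm I = p) :
    ∃ ψ : 𝓞 K →+* ZMod p, RingHom.ker ψ = I := by
  have hc : Nat.card (𝓞 K ⧸ I) = p := by
    rw [← hI, Ideal.absNorm_apply]; rfl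
  have : Finite (𝓞 K ⧸ I) := Nat.finite_of_card_ne_zero (by rw [hc]; exact hp.ne_zero)
  have := Fintype.ofFinite (𝓞 K ⧸ I)
  rw [Nat.card_eq_fintype_card] at hc
  let e := ZMod.ringEquivOfPrime (𝓞 K ⧸ I) hp hc
  refine ⟨e.symm.toRingHom.comp (Ideal.Quotient.mk I), ?_⟩
  ext x
  simp [RingHom.mem_ker, Ideal.Quotient.eq_zero_iff_mem]

lemma absNorm_ker {p : ℕ} (hp : p.Prime) (ψ : 𝓞 K →+* ZMod p) :
    Ideal.absNorm (RingHom.ker ψ) = p := by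
  have hs : Function.Surjective ψ := ZMod.ringHom_surjective ψ
  rw [Ideal.absNorm_apply]
  change Nat.card (𝓞 K ⧸ RingHom.ker ψ) = p
  rw [Nat.card_congr (RingHom.quotientKerEquivOfSurjective hs).toEquiv, Nat.card_zmod]

noncomputable def cl (I : Ideal (𝓞 K)) : ClassGroup (𝓞 K) :=
  open Classical in
  if h : I ∈ nonZeroDivisors (Ideal (𝓞 K)) then ClassGroup.mk0 ⟨I, h⟩ else 1

lemma cl_eq {I : Ideal (𝓞 K)} (h : I ≠ ⊥) :
    cl I = ClassGroup.mk0 ⟨I, mem_nonZeroDivisors_of_ne_zero h⟩ := by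
  rw [cl, dif_pos]

lemma cl_mul {I J : Ideal (𝓞 K)} (hI : I ≠ ⊥) (hJ : J ≠ ⊥) : cl (I * J) = cl I * cl J := by
  rw [cl_eq hI, cl_eq hJ, cl_eq (mul_ne_zero hI hJ), ← map_mul]; rfl

lemma cl_one_iff {I : Ideal (𝓞 K)} (hI : I ≠ ⊥) : cl I = 1 ↔ Submodule.IsPrincipal I := by
  rw [cl_eq hI, ClassGroup.mk0_eq_one_iff]

lemma cl_span {x : 𝓞 K} (hx : x ≠ 0) : cl (Ideal.span {x}) = 1 := by
  rw [cl_one_iff (by simpa using hx)]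
  exact ⟨x, rfl⟩

lemma ne_bot_of_absNorm {I : Ideal (𝓞 K)} {n : ℕ} (hI : Ideal.absNorm I = n) (hn : n ≠ 0) : I ≠ ⊥ := by
  rintro rfl
  simp at hI; omega

lemma split_off {Q : Ideal (𝓞 K)} {β : 𝓞 K} (hβ : β ∈ Q) : ∃ J, Ideal.span {β} = Q * J :=
  Ideal.dvd_iff_le.mpr ((Ideal.span_singleton_le_iff_mem Q).mpr hβ)

def Good (H : Subgroup (ClassGroup (𝓞 K))) (n : ℕ) : Prop :=
  ∀ I : Ideal (𝓞 K), Ideal.absNorm I = n → cl I ∈ H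

lemma step {H : Subgroup (ClassGroup (𝓞 K))} {Q : Ideal (𝓞 K)} {β : 𝓞 K} {p m : ℕ} (hβ : β ∈ Q)
    (hN : (Algebra.norm ℤ β).natAbs = p * m) (hp : p ≠ 0) (hm : m ≠ 0) (hQ : Ideal.absNorm Q = p)
    (hg : Good H m) : cl Q ∈ H := by
  obtain ⟨J, hJ⟩ := split_off hβ
  have hn := congrArg Ideal.absNorm hJ
  rw [Ideal.absNorm_span_singleton, map_mul, hQ, hN] at hn
  have hJm : Ideal.absNorm J = m := (Nat.eq_of_mul_eq_mul_left (Nat.pos_of_ne_zero hp) hn).symm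
  have hβ0 : β ≠ 0 := by
    rintro rfl
    simp at hN; omega
  have h1 := cl_span hβ0
  rw [hJ, cl_mul (ne_bot_of_absNorm hQ hp) (ne_bot_of_absNorm hJm hm)] at h1
  rw [eq_inv_of_mul_eq_one_left h1]
  exact H.inv_mem (hg J hJm)

lemma good_one (H : Subgroup (ClassGroup (𝓞 K))) : Good H 1 := by
  intro I hI
  rw [Ideal.absNorm_eq_one_iff] at hI
  subst hI
  rw [(cl_one_iff (by simp)).mpr]
  · exact H.one_mem
  · exact ⟨1, by simp⟩

def Nf (x y : ℤ) : ℤ := x^3 + 17*x^2*y - 20*x*y^2 + y^3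

lemma hom_root (D : Dat K) {S : Type*} [CommRing S] (ψ : 𝓞 K →+* S) :
    (ψ D.ρ)^3 - 17*(ψ D.ρ)^2 - 20*(ψ D.ρ) - 1 = 0 := by
  have := congrArg ψ D.h
  simpa [map_ofNat ψ] using this

lemma good_prime (D : Dat K) (H : Subgroup (ClassGroup (𝓞 K))) {p : ℕ} (hp : p.Prime)
    (hr : ∀ r : ZMod p, r^3 - 17*r^2 - 20*r - 1 = 0 →
      ∃ x y : ℤ, ∃ m : ℕ, (x : ZMod p) + y * r = 0 ∧ (Nf x y).natAbs = p * m ∧ m ≠ 0 ∧ Good H m) :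
    Good H p := by
  intro I hI
  obtain ⟨ψ, hψ⟩ := norm_prime_hom hp hI
  obtain ⟨x, y, m, h1, h2, h3, h4⟩ := hr _ (hom_root D ψ)
  refine step (β := (x : 𝓞 K) + y * D.ρ) (p := p) (m := m) ?_ ?_ hp.ne_zero h3 hI h4
  · rw [← hψ, RingHom.mem_ker]
    simpa using h1
  · rw [norm_lin D.ρ D.h D.b D.hb]; exact h2

lemma good_primes (D : Dat K) (H : Subgroup (ClassGroup (𝓞 K))) (h11 : Good H 11) :
    ∀ p : ℕ, p ≤ 77 → p.Prime → Good H p := by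
  have h17 : Good H 17 := by
    refine good_prime D H (by norm_num) fun r hr => ?_
    have : r = 3 ∨ r = 4 ∨ r = 10 := by revert r; decide
    rcases this with rfl | rfl | rfl
    · exact ⟨3, -1, 11, by decide, by decide, by decide, h11⟩
    · exact ⟨1, 4, 11, by decide, by decide, by decide, h11⟩
    · exact ⟨4, 3, 11, by decide, by decide, by decide, h11⟩
  have h31 : Good H 31 := by
    refine good_prime D H (by norm_num) fun r hr => ?_
    have : r = 12 ∨ r = 17 ∨ r = 19 := by revert r; decide
    rcases this with rfl | rfl | rfl
    · exact ⟨1, 18, 11, by decide, by decide, by decide, h11⟩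
    · exact ⟨17, -1, 11, by decide, by decide, by decide, h11⟩
    · exact ⟨19, -1, 11, by decide, by decide, by decide, h11⟩
  have h37 : Good H 37 := by
    refine good_prime D H (by norm_num) fun r hr => ?_
    have : r = 1 ∨ r = 18 ∨ r = 35 := by revert r; decide
    rcases this with rfl | rfl | rfl
    · exact ⟨1, -1, 1, by decide, by decide, by decide, good_one H⟩
    · exact ⟨1, 2, 1, by decide, by decide, by decide, good_one H⟩
    · exact ⟨2, 1, 1, by decide, by decide, by decide, good_one H⟩
  have h41 : Good H 41 := by
    refine good_prime D H (by norm_num) fun r hr => ?_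
    have : r = 31 ∨ r = 32 ∨ r = 36 := by revert r; decide
    rcases this with rfl | rfl | rfl
    · exact ⟨1, -4, 11, by decide, by decide, by decide, h11⟩
    · exact ⟨4, 5, 11, by decide, by decide, by decide, h11⟩
    · exact ⟨5, 1, 11, by decide, by decide, by decide, h11⟩
  have h47 : Good H 47 := by
    refine good_prime D H (by norm_num) fun r hr => ?_
    have : r = 6 ∨ r = 20 ∨ r = 38 := by revert r; decide
    rcases this with rfl | rfl | rfl
    · exact ⟨6, -1, 11, by decide, by decide, by decide, h11⟩
    · exact ⟨1, 7, 11, by decide, by decide, by decide, h11⟩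
    · exact ⟨7, 6, 11, by decide, by decide, by decide, h11⟩
  have h53 : Good H 53 := by
    refine good_prime D H (by norm_num) fun r hr => ?_
    have : r = 10 ∨ r = 24 ∨ r = 36 := by revert r; decide
    rcases this with rfl | rfl | rfl
    · exact ⟨3, 5, 11, by decide, by decide, by decide, h11⟩
    · exact ⟨5, 2, 11, by decide, by decide, by decide, h11⟩
    · exact ⟨2, -3, 11, by decide, by decide, by decide, h11⟩
  have h61 : Good H 61 := by
    refine good_prime D H (by norm_num) fun r hr => ?_
    have : r = 34 ∨ r = 51 ∨ r = 54 := by revert r; decide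
    rcases this with rfl | rfl | rfl
    · exact ⟨6, 7, 17, by decide, by decide, by decide, h17⟩
    · exact ⟨1, -6, 17, by decide, by decide, by decide, h17⟩
    · exact ⟨7, 1, 17, by decide, by decide, by decide, h17⟩
  have h67 : Good H 67 := by
    refine good_prime D H (by norm_num) fun r hr => ?_
    have : r = 8 ∨ r = 24 ∨ r = 52 := by revert r; decide
    rcases this with rfl | rfl | rfl
    · exact ⟨8, -1, 11, by decide, by decide, by decide, h11⟩
    · exact ⟨9, 8, 11, by decide, by decide, by decide, h11⟩
    · exact ⟨1, 9, 11, by decide, by decide, by decide, h11⟩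
  have hinert : ∀ p : ℕ, p.Prime → (∀ r : ZMod p, r^3 - 17*r^2 - 20*r - 1 ≠ 0) → Good H p :=
    fun p hp hn => good_prime D H hp fun r hr => absurd hr (hn r)
  intro p hp hpp
  interval_cases p <;> first
    | assumption
    | (exfalso; norm_num at hpp; done)
    | exact hinert _ hpp (by decide)

lemma absNorm_nat (h3 : finrank ℚ K = 3) (n : ℕ) :
    Ideal.absNorm (Ideal.span {(n : 𝓞 K)}) = n^3 := by
  rw [Ideal.absNorm_span_singleton]
  have := Algebra.norm_algebraMap (S := 𝓞 K) (n : ℤ)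
  rw [RingOfIntegers.rank, h3] at this
  simp at this
  rw [this]; simp [Int.natAbs_pow]

lemma good_all (D : Dat K) (h3 : finrank ℚ K = 3) (H : Subgroup (ClassGroup (𝓞 K))) (h11 : Good H 11)
    (I : Ideal (𝓞 K)) (hI : I ≠ 0) (hn : Ideal.absNorm I ≤ 77) : cl I ∈ H := by
  have hprime : ∀ Q : Ideal (𝓞 K), Q ≠ ⊥ → Q.IsPrime → Ideal.absNorm Q ≤ 77 → cl Q ∈ H := by
    intro Q hQ0 hQ hle
    have : NeZero Q := ⟨hQ0⟩
    have hpp := Nat.absNorm_under_prime Q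
    have hpQ := Int.absNorm_under_mem Q
    set p := Ideal.absNorm (Ideal.under ℤ Q)
    obtain ⟨J, hJ⟩ := split_off hpQ
    have hp0 : (p : 𝓞 K) ≠ 0 := by exact_mod_cast hpp.ne_zero
    have hn := absNorm_nat h3 p
    rw [hJ, map_mul] at hn
    have hJ0 : J ≠ ⊥ := by
      rintro rfl
      simp at hn
      exact pow_ne_zero 3 hpp.ne_zero hn.symm
    have hc := cl_span hp0
    rw [hJ, cl_mul hQ0 hJ0] at hc
    obtain ⟨k, hk, hQk⟩ := (Nat.dvd_prime_pow hpp).mp (Dvd.intro _ hn)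
    have hp77 : p ≤ 77 := le_trans (Nat.le_of_dvd (Nat.pos_of_ne_zero (by rw [Ne, Ideal.absNorm_eq_zero_iff]; exact hQ0)) (Int.absNorm_under_dvd_absNorm Q)) hle
    have hJH : cl J ∈ H → cl Q ∈ H := fun h => by
      rw [eq_inv_of_mul_eq_one_left hc]; exact H.inv_mem h
    rw [hQk] at hn
    have hpos := hpp.pos
    interval_cases k
    · exact good_one H _ (by simpa using hQk)
    · exact good_primes D H h11 p hp77 hpp Q (by simpa using hQk)
    · refine hJH (good_primes D H h11 p hp77 hpp J ?_)
      exact Nat.eq_of_mul_eq_mul_left (pow_pos hpos 2) (by rw [hn]; ring)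
    · refine hJH (good_one H J ?_)
      exact Nat.eq_of_mul_eq_mul_left (pow_pos hpos 3) (by rw [hn]; ring)
  induction I using UniqueFactorizationMonoid.induction_on_prime with
  | h₁ => exact absurd rfl hI
  | h₂ x hx =>
    rw [Ideal.isUnit_iff] at hx
    exact good_one H x (by rw [hx]; simp)
  | h₃ a p ha hp ih =>
    rw [map_mul] at hn
    have hp0 : Ideal.absNorm p ≠ 0 := by
      rw [Ne, Ideal.absNorm_eq_zero_iff]; exact hp.ne_zero
    have ha0 : Ideal.absNorm a ≠ 0 := by
      rw [Ne, Ideal.absNorm_eq_zero_iff]; exact ha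
    rw [cl_mul hp.ne_zero ha]
    refine H.mul_mem (hprime p hp.ne_zero (Ideal.isPrime_of_prime hp) ?_) (ih ha ?_)
    · exact le_trans (Nat.le_mul_of_pos_right _ (Nat.pos_of_ne_zero ha0)) hn
    · exact le_trans (Nat.le_mul_of_pos_left _ (Nat.pos_of_ne_zero hp0)) hn

/-- Every class is in H, by Minkowski -/
lemma H_top (D : Dat K) (h3 : finrank ℚ K = 3) (hc : InfinitePlace.nrComplexPlaces K = 0)
    (H : Subgroup (ClassGroup (𝓞 K))) (h11 : Good H 11) (c : ClassGroup (𝓞 K)) : c ∈ H := by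
  obtain ⟨I, rfl, hI⟩ := NumberField.exists_ideal_in_class_of_norm_le c
  rw [hc, h3, discr_eq D.ρ D.h D.b D.hb] at hI
  have h349 : √|(((349:ℤ)^2 : ℤ) : ℝ)| = 349 := by
    rw [show |(((349:ℤ)^2 : ℤ) : ℝ)| = (349:ℝ)^2 by norm_num]
    exact Real.sqrt_sq (by norm_num)
  rw [h349] at hI
  have h77 : Ideal.absNorm (I : Ideal (𝓞 K)) ≤ 77 := by
    have : (Ideal.absNorm (I : Ideal (𝓞 K)) : ℝ) < 78 := by
      refine lt_of_le_of_lt hI ?_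
      norm_num [Nat.factorial]
    have : Ideal.absNorm (I : Ideal (𝓞 K)) < 78 := by exact_mod_cast this
    omega
  have := good_all D h3 H h11 I (nonZeroDivisors.coe_ne_zero I) h77
  rw [cl_eq (nonZeroDivisors.coe_ne_zero I)] at this
  exact this

/-- an ideal of prime norm is determined by the image of ρ. -/
lemma ker_eq_of (D : Dat K) {p : ℕ} (φ ψ : 𝓞 K →+* ZMod p) (h : φ D.ρ = ψ D.ρ) :
    RingHom.ker φ = RingHom.ker ψ := by
  rw [hom_ext D.ρ D.b D.hb φ ψ h]

lemma sq_class (D : Dat K) (φ : 𝓞 K →+* ZMod 11) (x y : ℤ)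
    (hN : (Nf x y).natAbs = 121) (h0 : (x : ZMod 11) + y * φ D.ρ = 0)
    (hu : ∀ r : ZMod 11, r^3 - 17*r^2 - 20*r - 1 = 0 → (x : ZMod 11) + y * r = 0 → r = φ D.ρ) :
    Ideal.span {(x : 𝓞 K) + y * D.ρ} = RingHom.ker φ * RingHom.ker φ := by
  have h11 : Nat.Prime 11 := by norm_num
  have hk := absNorm_ker h11 φ
  obtain ⟨J, hJ⟩ := split_off (Q := RingHom.ker φ) (β := (x : 𝓞 K) + y * D.ρ) (by
    rw [RingHom.mem_ker]; simpa using h0)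
  have hn := congrArg Ideal.absNorm hJ
  rw [Ideal.absNorm_span_singleton, map_mul, hk, norm_lin D.ρ D.h D.b D.hb] at hn
  change (Nf x y).natAbs = _ at hn
  have hJn : Ideal.absNorm J = 11 := by omega
  obtain ⟨ψ, rfl⟩ := norm_prime_hom h11 hJn
  have hm : (x : 𝓞 K) + y * D.ρ ∈ RingHom.ker ψ := by
    have : (x : 𝓞 K) + y * D.ρ ∈ RingHom.ker φ * RingHom.ker ψ := by
      rw [← hJ]; exact Ideal.mem_span_singleton_self _
    exact (Ideal.mul_le_inf this).2
  rw [RingHom.mem_ker] at hm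
  simp at hm
  rw [hJ, ker_eq_of D ψ φ (hu _ (hom_root D ψ) hm)]

lemma prod_class (D : Dat K) (h3 : finrank ℚ K = 3) (φ₁ φ₂ φ₃ : 𝓞 K →+* ZMod 11) 
    (e1 : φ₁ D.ρ = 3) (e2 : φ₂ D.ρ = 6) (e3 : φ₃ D.ρ = 8) :
    cl (RingHom.ker φ₁) * cl (RingHom.ker φ₂) * cl (RingHom.ker φ₃) = 1 := by
  have h11 : Nat.Prime 11 := by norm_num
  have : Fact (Nat.Prime 11) := ⟨h11⟩
  have hle : ∀ φ ψ : 𝓞 K →+* ZMod 11, RingHom.ker φ ≤ RingHom.ker ψ → φ D.ρ = ψ D.ρ := by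
    intro φ ψ hl
    have : D.ρ - ((φ D.ρ).val : 𝓞 K) ∈ RingHom.ker φ := by
      rw [RingHom.mem_ker]; simp
    have := hl this
    rw [RingHom.mem_ker] at this
    simp at this
    exact (sub_eq_zero.mp this).symm
  have hmem : ∀ φ : 𝓞 K →+* ZMod 11, ((11:ℕ) : 𝓞 K) ∈ RingHom.ker φ := by
    intro φ; rw [RingHom.mem_ker, map_natCast]; rfl
  have hn1 := absNorm_ker h11 φ₁
  have hn2 := absNorm_ker h11 φ₂
  have hn3 := absNorm_ker h11 φ₃
  have hne1 := ne_bot_of_absNorm hn1 (by norm_num)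
  have hne2 := ne_bot_of_absNorm hn2 (by norm_num)
  have hne3 := ne_bot_of_absNorm hn3 (by norm_num)
  obtain ⟨J, hJ⟩ := split_off (hmem φ₁)
  have hJ2 : J ≤ RingHom.ker φ₂ := by
    have : RingHom.ker φ₁ * J ≤ RingHom.ker φ₂ := by
      rw [← hJ]; exact (Ideal.span_singleton_le_iff_mem _).mpr (hmem φ₂)
    refine ((RingHom.ker_isPrime φ₂).mul_le.mp this).resolve_left fun h => ?_
    have := hle _ _ h
    rw [e1, e2] at this
    exact absurd this (by decide)
  obtain ⟨M, rfl⟩ := Ideal.dvd_iff_le.mpr hJ2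
  have hM3 : M ≤ RingHom.ker φ₃ := by
    have : RingHom.ker φ₁ * (RingHom.ker φ₂ * M) ≤ RingHom.ker φ₃ := by
      rw [← hJ]; exact (Ideal.span_singleton_le_iff_mem _).mpr (hmem φ₃)
    rcases (RingHom.ker_isPrime φ₃).mul_le.mp this with h | h
    · have := hle _ _ h
      rw [e1, e3] at this
      exact absurd this (by decide)
    rcases (RingHom.ker_isPrime φ₃).mul_le.mp h with h | h
    · have := hle _ _ h
      rw [e2, e3] at this
      exact absurd this (by decide)
    exact h
  have hn := absNorm_nat h3 11
  rw [hJ, map_mul, map_mul, hn1, hn2] at hn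
  have hMn : Ideal.absNorm M = 11 := by omega
  obtain ⟨ψ, rfl⟩ := norm_prime_hom h11 hMn
  rw [ker_eq_of D ψ φ₃ (hle _ _ hM3)] at hJ
  have h0 : ((11:ℕ) : 𝓞 K) ≠ 0 := by norm_num
  have hc := cl_span h0
  rw [hJ, cl_mul hne1 (mul_ne_zero hne2 hne3), cl_mul hne2 hne3] at hc
  rw [mul_assoc]; exact hc

end C349

namespace C349
open NumberField Polynomial Module
set_option linter.all false
variable {K : Type*} [Field K] [NumberField K]

lemma units_bound (h3 : finrank ℚ K = 3) (χ : Fin 4 → (𝓞 K →* ℤ)) (u : Fin 4 → (𝓞 K)ˣ)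
    (h : ∀ i j, χ i (u j) = if i = j then -1 else 1) : False := by
  classical
  let X : (𝓞 K)ˣ →* (Fin 4 → ℤˣ) := Pi.monoidHom fun i => Units.map (χ i)
  have hX : ∀ x i, ((X x i : ℤˣ) : ℤ) = χ i x := fun x i => rfl
  have hsq : ∀ v : Fin 4 → ℤˣ, v ^ 2 = 1 := fun v => by
    funext i; exact Int.units_sq (v i)
  have hXu : ∀ i j, X (u j) i = if i = j then -1 else 1 := by
    intro i j
    apply Units.ext
    rw [hX, h]
    split_ifs <;> rfl
  have hsurj : Function.Surjective X := by
    intro v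
    refine ⟨∏ j, u j ^ (if v j = -1 then 1 else 0), ?_⟩
    funext i
    rw [map_prod, Finset.prod_apply, Finset.prod_eq_single i]
    · rw [map_pow, Pi.pow_apply, hXu, if_pos rfl]
      rcases Int.units_eq_one_or (v i) with hv | hv
      · rw [hv]; simp
      · rw [hv]; simp
    · intro j _ hj
      rw [map_pow, Pi.pow_apply, hXu, if_neg (Ne.symm hj), one_pow]
    · simp
  let r := Units.rank K
  have hr : r ≤ 2 := by
    have h1 := InfinitePlace.card_add_two_mul_card_eq_rank K
    have h2 := InfinitePlace.card_eq_nrRealPlaces_add_nrComplexPlaces K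
    simp only [r, Units.rank]
    omega
  let g : Bool × (Fin r → Bool) → (Fin 4 → ℤˣ) := fun p =>
    (if p.1 then X (-1) else 1) * ∏ i, (if p.2 i then X (Units.fundSystem K i) else 1)
  have hg : Function.Surjective g := by
    intro v
    obtain ⟨x, rfl⟩ := hsurj v
    obtain ⟨⟨ζ, e⟩, hx, -⟩ := Units.exist_unique_eq_mul_prod K x
    have hζ := Units.torsion_eq_one_or_neg_one_of_odd_finrank (K := K) (by rw [h3]; decide) ζ
    refine ⟨(decide ((ζ : (𝓞 K)ˣ) ≠ 1), fun i => decide (Odd (e i))), ?_⟩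
    simp only [g]
    rw [hx, map_mul, map_prod]
    congr 1
    · rcases hζ with hζ | hζ
      · simp [hζ]
      · have : (-1 : (𝓞 K)ˣ) ≠ 1 := by
          intro h
          have := congrArg (fun z : (𝓞 K)ˣ => (z : 𝓞 K)) h
          simp at this
          norm_num at this
        simp [hζ, this]
    · refine Finset.prod_congr rfl fun i _ => ?_
      rw [map_zpow]
      rcases Int.even_or_odd' (e i) with ⟨k, hk | hk⟩
      · have : ¬ Odd (e i) := by rw [hk]; simp
        simp only [this, decide_false]
        rw [hk, zpow_mul, zpow_ofNat, hsq, one_zpow]; rfl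
      · have : Odd (e i) := by rw [hk]; simp
        simp only [this, decide_true]
        rw [hk, zpow_add, zpow_mul, zpow_ofNat, hsq, one_zpow]; simp
  have := Fintype.card_le_of_surjective g hg
  simp at this
  have h4 : 2 ^ r ≤ 2 ^ 2 := Nat.pow_le_pow_right (by norm_num) hr
  omega

noncomputable def qc {q : ℕ} [Fact q.Prime] (ψ : 𝓞 K →+* ZMod q) : 𝓞 K →* ℤ :=
  (quadraticChar (ZMod q)).toMonoidHom.comp ψ.toMonoidHom

lemma qc_apply {q : ℕ} [Fact q.Prime] (ψ : 𝓞 K →+* ZMod q) (x : 𝓞 K) :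
    qc ψ x = quadraticChar (ZMod q) (ψ x) := rfl

lemma not_principal (D : Dat K) (h3 : finrank ℚ K = 3) (P : Ideal (𝓞 K)) (α : 𝓞 K)
    (hP : Ideal.span {α} = P * P) (χ : Fin 4 → (𝓞 K →* ℤ))
    (h0 : ∀ i, χ i (-1) = if i = 0 then -1 else 1)
    (h1 : ∀ i, χ i D.ρ = if i = 1 then -1 else 1)
    (h2 : ∀ i, χ i (D.ρ + 1) = if i = 2 then -1 else 1)
    (hα : ∀ i, χ i α = if i = 3 then -1 else 1) : ¬ Submodule.IsPrincipal P := by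
  rintro ⟨β, rfl⟩
  change Ideal.span {α} = Ideal.span {β} * Ideal.span {β} at hP
  rw [Ideal.span_singleton_mul_span_singleton, Ideal.span_singleton_eq_span_singleton] at hP
  obtain ⟨u, hu⟩ := hP.symm
  let u1 : (𝓞 K)ˣ := ⟨D.ρ, D.ρ^2 - 17 * D.ρ - 20, by linear_combination D.h, by linear_combination D.h⟩
  let u2 : (𝓞 K)ˣ := ⟨D.ρ + 1, -(D.ρ^2 - 18 * D.ρ - 2), by linear_combination -D.h, by linear_combination -D.h⟩
  refine units_bound h3 χ ![-1, u1, u2, u] fun i j => ?_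
  have hcu : ∀ i, χ i u = χ i α := by
    intro i
    rw [← hu, map_mul, map_mul]
    have hunit : IsUnit (χ i α) := by rw [hα]; split_ifs <;> simp
    rw [← hu, map_mul, map_mul] at hunit
    have h' := isUnit_of_mul_isUnit_left (isUnit_of_mul_isUnit_left hunit)
    rcases Int.isUnit_iff.mp h' with h | h <;> rw [h] <;> simp
  fin_cases j
  · simpa using h0 i
  · simpa [u1] using h1 i
  · simpa [u2] using h2 i
  · simpa [hα] using hcu i

instance : Fact (Nat.Prime 31) := ⟨by norm_num⟩
instance : Fact (Nat.Prime 37) := ⟨by norm_num⟩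
instance : Fact (Nat.Prime 41) := ⟨by norm_num⟩
instance : Fact (Nat.Prime 47) := ⟨by norm_num⟩
instance : Fact (Nat.Prime 269) := ⟨by norm_num⟩


lemma exists_char (D : Dat K) (q : ℕ) [Fact q.Prime] (r : ℤ)
    (hr : ((r:ℤ) : ZMod q)^3 - 17*((r:ℤ) : ZMod q)^2 - 20*((r:ℤ) : ZMod q) - 1 = 0) :
    ∃ χ : 𝓞 K →* ℤ, ∀ x y : ℤ, χ ((x : 𝓞 K) + y * D.ρ) = legendreSym q (x + y * r) := by
  obtain ⟨ψ, hψ⟩ := exists_hom D.ρ D.h D.b D.hb _ hr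
  refine ⟨qc ψ, fun x y => ?_⟩
  rw [qc_apply, legendreSym, map_add, map_mul, hψ]
  simp

lemma not_principal' (D : Dat K) (h3 : finrank ℚ K = 3) (P : Ideal (𝓞 K)) (x y : ℤ)
    (hP : Ideal.span {(x : 𝓞 K) + y * D.ρ} = P * P) (χ : Fin 4 → (𝓞 K →* ℤ))
    (L : Fin 4 → ℤ → ℤ → ℤ)
    (hL : ∀ i (x y : ℤ), χ i ((x : 𝓞 K) + y * D.ρ) = L i x y)
    (h0 : ∀ i, L i (-1) 0 = if i = 0 then -1 else 1)
    (h1 : ∀ i, L i 0 1 = if i = 1 then -1 else 1)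
    (h2 : ∀ i, L i 1 1 = if i = 2 then -1 else 1)
    (hα : ∀ i, L i x y = if i = 3 then -1 else 1) : ¬ Submodule.IsPrincipal P := by
  refine not_principal D h3 P _ hP χ (fun i => ?_) (fun i => ?_) (fun i => ?_) (fun i => ?_)
  · rw [← h0, ← hL]; simp
  · rw [← h1, ← hL]; simp
  · rw [← h2, ← hL]; simp [add_comm]
  · rw [← hα, ← hL]

lemma np3 (D : Dat K) (h3 : finrank ℚ K = 3) (P : Ideal (𝓞 K)) 
    (hP : Ideal.span {((2:ℤ) : 𝓞 K) + (3:ℤ) * D.ρ} = P * P) : ¬ Submodule.IsPrincipal P := by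
  obtain ⟨c0, hc0⟩ := exists_char D 31 19 (by decide)
  obtain ⟨c1, hc1⟩ := exists_char D 37 35 (by decide)
  obtain ⟨c2, hc2⟩ := exists_char D 269 97 (by decide)
  obtain ⟨c3, hc3⟩ := exists_char D 41 31 (by decide)
  refine not_principal' D h3 P 2 3 hP ![c0, c1, c2, c3]
    ![fun x y => legendreSym 31 (x + y * 19), fun x y => legendreSym 37 (x + y * 35),
      fun x y => legendreSym 269 (x + y * 97), fun x y => legendreSym 41 (x + y * 31)] ?_ ?_ ?_ ?_ ?_
  · intro i x y; fin_cases i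
    · exact hc0 x y
    · exact hc1 x y
    · exact hc2 x y
    · exact hc3 x y
  all_goals intro i; fin_cases i <;> norm_num <;> decide

lemma np6 (D : Dat K) (h3 : finrank ℚ K = 3) (P : Ideal (𝓞 K)) 
    (hP : Ideal.span {((1:ℤ) : 𝓞 K) + (-2:ℤ) * D.ρ} = P * P) : ¬ Submodule.IsPrincipal P := by
  obtain ⟨c0, hc0⟩ := exists_char D 31 19 (by decide)
  obtain ⟨c1, hc1⟩ := exists_char D 269 60 (by decide)
  obtain ⟨c2, hc2⟩ := exists_char D 37 1 (by decide)
  obtain ⟨c3, hc3⟩ := exists_char D 41 32 (by decide)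
  refine not_principal' D h3 P 1 (-2) hP ![c0, c1, c2, c3]
    ![fun x y => legendreSym 31 (x + y * 19), fun x y => legendreSym 269 (x + y * 60),
      fun x y => legendreSym 37 (x + y * 1), fun x y => legendreSym 41 (x + y * 32)] ?_ ?_ ?_ ?_ ?_
  · intro i x y; fin_cases i
    · exact hc0 x y
    · exact hc1 x y
    · exact hc2 x y
    · exact hc3 x y
  all_goals intro i; fin_cases i <;> norm_num <;> decide

lemma np8 (D : Dat K) (h3 : finrank ℚ K = 3) (P : Ideal (𝓞 K)) 
    (hP : Ideal.span {((3:ℤ) : 𝓞 K) + (1:ℤ) * D.ρ} = P * P) : ¬ Submodule.IsPrincipal P := by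
  obtain ⟨c0, hc0⟩ := exists_char D 47 6 (by decide)
  obtain ⟨c1, hc1⟩ := exists_char D 37 35 (by decide)
  obtain ⟨c2, hc2⟩ := exists_char D 37 1 (by decide)
  obtain ⟨c3, hc3⟩ := exists_char D 41 31 (by decide)
  refine not_principal' D h3 P 3 1 hP ![c0, c1, c2, c3]
    ![fun x y => legendreSym 47 (x + y * 6), fun x y => legendreSym 37 (x + y * 35),
      fun x y => legendreSym 37 (x + y * 1), fun x y => legendreSym 41 (x + y * 31)] ?_ ?_ ?_ ?_ ?_
  · intro i x y; fin_cases i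
    · exact hc0 x y
    · exact hc1 x y
    · exact hc2 x y
    · exact hc3 x y
  all_goals intro i; fin_cases i <;> norm_num <;> decide

theorem main (h3 : finrank ℚ K = 3) (hc : InfinitePlace.nrComplexPlaces K = 0) 
    (ρ : 𝓞 K) (hρ : ρ^3 - 17*ρ^2 - 20*ρ - 1 = 0) :
    NumberField.classNumber K = 4 ∧
    Nonempty (ClassGroup (𝓞 K) ≃* Multiplicative (ZMod 2 × ZMod 2)) := by
  obtain ⟨b, hb⟩ := exists_int_basis h3 ρ hρ
  let D : Dat K := ⟨ρ, hρ, b, hb⟩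
  obtain ⟨φ₁, e1⟩ := exists_hom D.ρ D.h D.b D.hb (3 : ZMod 11) (by decide)
  obtain ⟨φ₂, e2⟩ := exists_hom D.ρ D.h D.b D.hb (6 : ZMod 11) (by decide)
  obtain ⟨φ₃, e3⟩ := exists_hom D.ρ D.h D.b D.hb (8 : ZMod 11) (by decide)
  have h11 : Nat.Prime 11 := by norm_num
  have s1 := sq_class D φ₁ 2 3 (by decide) (by rw [e1]; decide) (by rw [e1]; decide)
  have s2 := sq_class D φ₂ 1 (-2) (by decide) (by rw [e2]; decide) (by rw [e2]; decide)
  have s3 := sq_class D φ₃ 3 1 (by decide) (by rw [e3]; decide) (by rw [e3]; decide)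
  have n1 := ne_bot_of_absNorm (absNorm_ker h11 φ₁) (by norm_num)
  have n2 := ne_bot_of_absNorm (absNorm_ker h11 φ₂) (by norm_num)
  have n3 := ne_bot_of_absNorm (absNorm_ker h11 φ₃) (by norm_num)
  have hne1 : cl (RingHom.ker φ₁) ≠ 1 := fun h => np3 D h3 _ s1 ((cl_one_iff n1).mp h)
  have hne2 : cl (RingHom.ker φ₂) ≠ 1 := fun h => np6 D h3 _ s2 ((cl_one_iff n2).mp h)
  have hne3 : cl (RingHom.ker φ₃) ≠ 1 := fun h => np8 D h3 _ s3 ((cl_one_iff n3).mp h)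
  have hsq : ∀ (P : Ideal (𝓞 K)) (α : 𝓞 K), P ≠ ⊥ → Ideal.span {α} = P * P → cl P * cl P = 1 := by
    intro P α hP h
    rw [← cl_mul hP hP, ← h]
    apply cl_span
    rintro rfl
    have : P * P = ⊥ := by rw [← h]; simp
    exact mul_ne_zero hP hP this
  have q1 := hsq _ _ n1 s1
  have q2 := hsq _ _ n2 s2
  have q3 := hsq _ _ n3 s3
  have hp := prod_class D h3 φ₁ φ₂ φ₃ e1 e2 e3
  have hroots : ∀ I : Ideal (𝓞 K), Ideal.absNorm I = 11 → 
      I = RingHom.ker φ₁ ∨ I = RingHom.ker φ₂ ∨ I = RingHom.ker φ₃ := by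
    intro I hI
    obtain ⟨ψ, rfl⟩ := norm_prime_hom h11 hI
    have : ∀ r : ZMod 11, r^3 - 17*r^2 - 20*r - 1 = 0 → r = 3 ∨ r = 6 ∨ r = 8 := by decide
    rcases this _ (hom_root D ψ) with h | h | h
    · exact Or.inl (ker_eq_of D _ _ (h.trans e1.symm))
    · exact Or.inr (Or.inl (ker_eq_of D _ _ (h.trans e2.symm)))
    · exact Or.inr (Or.inr (ker_eq_of D _ _ (h.trans e3.symm)))
  generalize hc1 : cl (RingHom.ker φ₁) = c1 at *
  generalize hc2 : cl (RingHom.ker φ₂) = c2 at *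
  generalize hc3 : cl (RingHom.ker φ₃) = c3 at *
  have h3' : c3 = c1 * c2 := by
    have := eq_inv_of_mul_eq_one_left hp
    rw [this]; exact (inv_eq_of_mul_eq_one_left q3).symm
  have h12 : c1 ≠ c2 := by
    rintro rfl
    exact hne3 (h3'.trans q1)
  let H : Subgroup (ClassGroup (𝓞 K)) := Subgroup.closure {c1, c2}
  have m1 : c1 ∈ H := Subgroup.subset_closure (by simp)
  have m2 : c2 ∈ H := Subgroup.subset_closure (by simp)
  have hG : Good H 11 := by
    intro I hI
    rcases hroots I hI with rfl | rfl | rfl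
    · rw [hc1]; exact m1
    · rw [hc2]; exact m2
    · rw [hc3, h3']; exact H.mul_mem m1 m2
  have hall : ∀ c : ClassGroup (𝓞 K), c = 1 ∨ c = c1 ∨ c = c2 ∨ c = c1 * c2 := by
    intro c
    have hcH := H_top D h3 hc H hG c
    obtain ⟨m, n, hmn⟩ := Subgroup.mem_closure_pair.mp hcH
    have hz : ∀ a : ClassGroup (𝓞 K), a * a = 1 → ∀ n : ℤ, a ^ n = 1 ∨ a ^ n = a := by
      intro a ha n
      rcases Int.even_or_odd' n with ⟨k, hk | hk⟩
      · left; rw [hk, zpow_mul, zpow_ofNat, pow_two, ha, one_zpow]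
      · right; rw [hk, zpow_add, zpow_mul, zpow_ofNat, pow_two, ha, one_zpow]; simp
    rw [← hmn]
    rcases hz c1 q1 m with h | h <;> rcases hz c2 q2 n with h' | h' <;> rw [h, h'] <;> simp
  have hexp : ∀ c : ClassGroup (𝓞 K), c ^ 2 = 1 := by
    intro c
    rcases hall c with rfl | rfl | rfl | rfl
    · simp
    · rw [pow_two, q1]
    · rw [pow_two, q2]
    · rw [mul_pow, pow_two, pow_two, q1, q2, one_mul]
  have hcard : Fintype.card (ClassGroup (𝓞 K)) = 4 := by
    classical
    have : (Finset.univ : Finset (ClassGroup (𝓞 K))) = {1, c1, c2, c1 * c2} := by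
      ext c; simpa using hall c
    rw [← Finset.card_univ, this]
    have a1 : c1 * c2 ≠ 1 := by rw [← h3']; exact hne3
    have a2 : c1 ≠ c1 * c2 := by simpa using hne2
    have a3 : c2 ≠ c1 * c2 := by simpa using hne1
    rw [Finset.card_insert_of_notMem, Finset.card_insert_of_notMem, Finset.card_insert_of_notMem,
      Finset.card_singleton]
    · simpa using hne1
    · simpa using ⟨h12, hne2⟩
    · simpa using ⟨hne1.symm, hne2.symm, a1.symm⟩
  refine ⟨hcard, ?_⟩
  have : IsKleinFour (ClassGroup (𝓞 K)) := by
    refine ⟨by rw [Nat.card_eq_fintype_card, hcard], ?_⟩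
    have hd := Monoid.exponent_dvd_of_forall_pow_eq_one hexp
    rcases (Nat.dvd_prime Nat.prime_two).mp hd with h | h
    · exfalso
      rw [Monoid.exp_eq_one_iff] at h
      exact h12 (Subsingleton.elim _ _)
    · exact h
  exact IsKleinFour.nonempty_mulEquiv
end C349

set_option linter.all false
namespace C349
open NumberField Polynomial Module

instance fact349 : Fact (Nat.Prime 349) := ⟨by norm_num⟩

def HH : Finset (ZMod 349) := Finset.univ.filter (fun a => a ^ 116 = 1)

def n0 (x : ZMod 349) : ℕ := if x = 0 then 1 else 0
def nn (v x : ZMod 349) : ℕ := if x ^ 116 = v then 1 else 0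

lemma pow_cases (x : ZMod 349) :
    x = 0 ∨ x ^ 116 = 1 ∨ x ^ 116 = 226 ∨ x ^ 116 = 122 := by
  by_cases h : x = 0
  · exact Or.inl h
  right
  have h1 : x ^ 348 = 1 := ZMod.pow_card_sub_one_eq_one h
  have e1 : (226 : ZMod 349) + 122 = -1 := by decide
  have e2 : (226 : ZMod 349) * 122 = 1 := by decide
  have h2 : (x ^ 116 - 1) * ((x ^ 116 - 226) * (x ^ 116 - 122)) = 0 := by
    linear_combination h1 + (x^116 * x^116 - x^116) * (-e1) + (x^116 - 1) * e2
  rcases mul_eq_zero.1 h2 with h | h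
  · left; exact sub_eq_zero.1 h
  rcases mul_eq_zero.1 h with h | h
  · right; left; exact sub_eq_zero.1 h
  · right; right; exact sub_eq_zero.1 h

lemma HH_card : HH.card = 116 := by decide +kernel
lemma c10 : ∑ k ∈ HH, n0 (1 + 1 * k) = 1 := by decide +kernel
lemma c11 : ∑ k ∈ HH, nn 1 (1 + 1 * k) = 42 := by decide +kernel
lemma c12 : ∑ k ∈ HH, nn 226 (1 + 1 * k) = 37 := by decide +kernel
lemma c13 : ∑ k ∈ HH, nn 122 (1 + 1 * k) = 36 := by decide +kernel
lemma c20 : ∑ k ∈ HH, n0 (1 + 2 * k) = 0 := by decide +kernel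
lemma c21 : ∑ k ∈ HH, nn 1 (1 + 2 * k) = 37 := by decide +kernel
lemma c22 : ∑ k ∈ HH, nn 226 (1 + 2 * k) = 36 := by decide +kernel
lemma c23 : ∑ k ∈ HH, nn 122 (1 + 2 * k) = 43 := by decide +kernel
lemma c30 : ∑ k : ZMod 349, n0 k = 1 := by decide +kernel
lemma c31 : ∑ k : ZMod 349, nn 1 k = 116 := by decide +kernel
lemma c32 : ∑ k : ZMod 349, nn 226 k = 116 := by decide +kernel
lemma c33 : ∑ k : ZMod 349, nn 122 k = 116 := by decide +kernel

section per
variable {F : Type*} [Field F] (e : AddChar (ZMod 349) F)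

def eta (c : ZMod 349) : F := ∑ h ∈ HH, e (c * h)

lemma mem_HH (a : ZMod 349) : a ∈ HH ↔ a ^ 116 = 1 := by simp [HH]

lemma sum_HH_mul (f : ZMod 349 → F) (u : ZMod 349) (hu : u ^ 116 = 1) :
    ∑ h ∈ HH, f (u * h) = ∑ h ∈ HH, f h := by
  have hu0 : u ≠ 0 := by
    rintro rfl
    rw [zero_pow (by norm_num)] at hu
    exact zero_ne_one hu
  refine Finset.sum_nbij' (fun h => u * h) (fun h => u⁻¹ * h) ?_ ?_ ?_ ?_ ?_
  · intro a ha; rw [mem_HH] at *; rw [mul_pow, hu, ha, one_mul]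
  · intro a ha; rw [mem_HH] at *; rw [mul_pow, inv_pow, hu, ha]; simp
  · intro a ha; field_simp
  · intro a ha; field_simp
  · intro a ha; rfl

lemma eta_mul_unit (c u : ZMod 349) (hu : u ^ 116 = 1) : eta e (c * u) = eta e c := by
  unfold eta
  rw [← sum_HH_mul (fun h => e (c * h)) u hu]
  simp only [mul_assoc]

lemma eta_congr (a b : ZMod 349) (hb : b ≠ 0) (h : a ^ 116 = b ^ 116) : eta e a = eta e b := by
  have := eta_mul_unit e b (a / b) (by rw [div_pow, h, div_self (pow_ne_zero _ hb)])
  rwa [mul_div_cancel₀ _ hb] at this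

lemma eta_zero : eta e 0 = 116 := by
  simp [eta, HH_card]

lemma eta_eq (x : ZMod 349) : eta e x = (n0 x : F) * 116 + (nn 1 x : F) * eta e 1
    + (nn 226 x : F) * eta e 2 + (nn 122 x : F) * eta e 4 := by
  have d1 : (1 : ZMod 349) ^ 116 = 1 := one_pow _
  have d2 : (2 : ZMod 349) ^ 116 = 226 := by decide +kernel
  have d4 : (4 : ZMod 349) ^ 116 = 122 := by decide +kernel
  have a1 : (1 : ZMod 349) ≠ 226 := by decide
  have a2 : (1 : ZMod 349) ≠ 122 := by decide
  have a3 : (226 : ZMod 349) ≠ 122 := by decide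
  have z1 : (0 : ZMod 349) ≠ 1 := by decide
  have z2 : (0 : ZMod 349) ≠ 226 := by decide
  have z3 : (0 : ZMod 349) ≠ 122 := by decide
  have key : ∀ v : ZMod 349, v ≠ 0 → x ^ 116 = v → x ≠ 0 := by
    rintro v hv h rfl
    rw [zero_pow (by norm_num)] at h
    exact hv h.symm
  rcases pow_cases x with h | h | h | h
  · subst h
    simp [n0, nn, eta_zero, z1, z2, z3]
  · have := key _ z1.symm h
    rw [eta_congr e x 1 (by decide) (by rw [h, d1])]
    simp [n0, nn, this, h, a1, a2]
  · have := key _ z2.symm h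
    rw [eta_congr e x 2 (by decide) (by rw [h, d2])]
    simp [n0, nn, this, h, a1.symm, a3]
  · have := key _ z3.symm h
    rw [eta_congr e x 4 (by decide) (by rw [h, d4])]
    simp [n0, nn, this, h, a2.symm, a3.symm]

lemma sum_eta (s : Finset (ZMod 349)) (f : ZMod 349 → ZMod 349) :
    ∑ k ∈ s, eta e (f k) = ((∑ k ∈ s, n0 (f k) : ℕ) : F) * 116
    + ((∑ k ∈ s, nn 1 (f k) : ℕ) : F) * eta e 1
    + ((∑ k ∈ s, nn 226 (f k) : ℕ) : F) * eta e 2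
    + ((∑ k ∈ s, nn 122 (f k) : ℕ) : F) * eta e 4 := by
  rw [Finset.sum_congr rfl (fun k _ => eta_eq e (f k))]
  simp only [Finset.sum_add_distrib, Nat.cast_sum, Finset.sum_mul]

lemma eta_mul (c d : ZMod 349) : eta e c * eta e d = ∑ k ∈ HH, eta e (c + d * k) := by
  have : ∀ h ∈ HH, e (c * h) * eta e d = ∑ k ∈ HH, e ((c + d * k) * h) := by
    intro h hh
    rw [mem_HH] at hh
    rw [← eta_mul_unit e d h hh, eta, Finset.mul_sum]
    refine Finset.sum_congr rfl fun k _ => ?_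
    rw [← AddChar.map_add_eq_mul]
    refine congrArg e ?_
    ring
  conv_lhs => rw [eta, Finset.sum_mul]
  rw [Finset.sum_congr rfl this, Finset.sum_comm]
  rfl

lemma sum_all (he : e.IsPrimitive) : ∑ a : ZMod 349, eta e a = 0 := by
  unfold eta
  rw [Finset.sum_comm]
  refine Finset.sum_eq_zero fun h hh => ?_
  have h0 : h ≠ 0 := by
    rintro rfl
    rw [mem_HH, zero_pow (by norm_num)] at hh
    exact zero_ne_one hh
  have := AddChar.sum_mulShift (R' := F) h he
  simpa [h0] using this

lemma eta_cubic [CharZero F] (he : e.IsPrimitive) :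
    (eta e 1 + 6) ^ 3 - 17 * (eta e 1 + 6) ^ 2 - 20 * (eta e 1 + 6) - 1 = 0 := by
  have s := sum_all e he
  rw [sum_eta e Finset.univ (fun k => k), c30, c31, c32, c33] at s
  have m1 := eta_mul e 1 1
  rw [sum_eta e HH (fun k => 1 + 1 * k), c10, c11, c12, c13] at m1
  have m2 := eta_mul e 1 2
  rw [sum_eta e HH (fun k => 1 + 2 * k), c20, c21, c22, c23] at m2
  push_cast at s m1 m2
  have s' : eta e 1 + eta e 2 + eta e 4 = -1 := by
    have : (116 : F) ≠ 0 := by norm_num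
    apply mul_left_cancel₀ this
    linear_combination s
  have h4 : eta e 4 = -1 - eta e 1 - eta e 2 := by linear_combination s'
  rw [h4] at m1 m2
  have h2 : eta e 2 = eta e 1 ^ 2 - 6 * eta e 1 - 80 := by linear_combination -m1
  rw [h2] at m2
  linear_combination m2

end per

theorem final (K : Type*) [Field K] [CharZero K] [Algebra ℚ K] [IsCyclotomicExtension {349} ℚ K]
    (L : IntermediateField ℚ K) [NumberField L] (hL : finrank ℚ L = 3) :
    classNumber L = 4 ∧
      Nonempty (ClassGroup (𝓞 L) ≃* Multiplicative (ZMod 2 × ZMod 2)) := by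
  haveI : IsAbelianGalois ℚ K := IsCyclotomicExtension.isAbelianGalois {349} ℚ K
  haveI : FiniteDimensional ℚ K := IsCyclotomicExtension.finiteDimensional {349} ℚ K
  have hA : (DivisionRing.toRatAlgebra : Algebra ℚ L) = L.algebra' := Subsingleton.elim _ _
  have hL' : @finrank ℚ L _ _ (DivisionRing.toRatAlgebra : Algebra ℚ L).toModule = 3 := by
    rw [hA]; exact hL
  have hG : @IsGalois ℚ _ L _ (DivisionRing.toRatAlgebra : Algebra ℚ L) := by
    rw [hA]
    exact (inferInstance : @IsAbelianGalois ℚ L _ _ L.algebra').toIsGalois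
  have hc : InfinitePlace.nrComplexPlaces L = 0 := by
    haveI : IsUnramifiedAtInfinitePlaces ℚ L :=
      IsUnramifiedAtInfinitePlaces_of_odd_finrank (by rw [hL']; decide)
    have h1 := IsUnramifiedAtInfinitePlaces.card_infinitePlace ℚ L
    have h2 := InfinitePlace.card_add_two_mul_card_eq_rank L
    have h3 := InfinitePlace.card_eq_nrRealPlaces_add_nrComplexPlaces L
    have h4 : Fintype.card (InfinitePlace ℚ) = 1 := by
      have h2 := InfinitePlace.card_add_two_mul_card_eq_rank ℚ
      have h3 := InfinitePlace.card_eq_nrRealPlaces_add_nrComplexPlaces ℚ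
      have := Fintype.card_pos (α := InfinitePlace ℚ)
      rw [finrank_self] at h2
      omega
    rw [hL'] at h1 h2
    omega
  have hζ := IsCyclotomicExtension.zeta_spec 349 ℚ K
  set ζ := IsCyclotomicExtension.zeta 349 ℚ K
  have hp : (AddChar.zmodChar 349 hζ.pow_eq_one).IsPrimitive :=
    AddChar.zmodChar_primitive_of_primitive_root 349 hζ
  set e := AddChar.zmodChar 349 hζ.pow_eq_one
  have hcub := eta_cubic e hp
  have hfin : finrank ℚ K = 348 := by
    rw [IsCyclotomicExtension.finrank (n := 349) K (cyclotomic.irreducible_rat (by norm_num)),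
      Nat.totient_prime (by norm_num)]
  have hcard : Nat.card L.fixingSubgroup = 116 := by
    rw [IsGalois.card_fixingSubgroup_eq_finrank]
    have := finrank_mul_finrank ℚ L K
    rw [hL, hfin] at this
    omega
  have hmem : eta e 1 ∈ L := by
    rw [← IsGalois.fixedField_fixingSubgroup L, IntermediateField.mem_fixedField_iff]
    intro σ hσ
    have hs : σ ^ 116 = 1 := by
      have := pow_card_eq_one' (x := (⟨σ, hσ⟩ : L.fixingSubgroup))
      rw [hcard] at this
      simpa using congrArg Subtype.val this
    set u : ZMod 349 := (hζ.autToPow ℚ σ : ZMod 349) with hu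
    have hu1 : u ^ 116 = 1 := by
      rw [hu, ← Units.val_pow_eq_pow_val, ← map_pow, hs, map_one, Units.val_one]
    have hσe : ∀ a, σ (e a) = e (u * a) := by
      intro a
      have h1 : σ ζ = e u := by
        rw [AddChar.zmodChar_apply, ← hζ.autToPow_spec ℚ σ]
      have h2 : e (u * a) = e u ^ a.val := by
        rw [← AddChar.map_nsmul_eq_pow]
        refine congrArg e ?_
        rw [nsmul_eq_mul, ZMod.natCast_zmod_val, mul_comm]
      rw [h2, ← h1, AddChar.zmodChar_apply, map_pow]
    rw [eta, map_sum]
    simp only [one_mul, hσe]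
    exact sum_HH_mul (fun h => e h) u hu1
  have hr : ((⟨eta e 1, hmem⟩ : L) + 6) ^ 3 - 17 * ((⟨eta e 1, hmem⟩ : L) + 6) ^ 2
      - 20 * ((⟨eta e 1, hmem⟩ : L) + 6) - 1 = 0 := by
    apply Subtype.val_injective
    push_cast
    exact hcub
  set r : L := (⟨eta e 1, hmem⟩ : L) + 6
  have hint : IsIntegral ℤ r := by
    refine ⟨X ^ 3 - 17 * X ^ 2 - 20 * X - 1, ?_, ?_⟩
    · have : (X ^ 3 - 17 * X ^ 2 - 20 * X - 1 : ℤ[X]) = X ^ 3 + (-17 * X ^ 2 - 20 * X - 1) := by ring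
      rw [this]
      refine monic_X_pow_add ?_
      have : (-17 * X ^ 2 - 20 * X - 1 : ℤ[X]) = C (-17) * X ^ 2 + C (-20) * X + C (-1) := by
        simp only [map_neg, map_one, C_ofNat]; ring
      rw [this]
      exact lt_of_le_of_lt degree_quadratic_le (by norm_num)
    · simp only [eval₂_sub, eval₂_mul, eval₂_pow, eval₂_X, eval₂_one, eval₂_ofNat]
      exact_mod_cast hr
  refine main hL' hc (⟨r, hint⟩ : 𝓞 L) ?_
  apply RingOfIntegers.coe_injective
  simp only [map_sub, map_mul, map_pow, map_one, map_ofNat, map_zero]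
  exact hr

end C349

/-- Let `ℓ = 349` and let `L` be the unique degree-3 intermediate field of `ℚ(ζ_ℓ)/ℚ`.
Then the class number of `L` is `4` and the ideal class group of `L` is isomorphic to
`(ℤ/2ℤ) × (ℤ/2ℤ)`. -/
theorem classGroup_of_cubic_subfield_349
    (L : IntermediateField ℚ (CyclotomicField 349 ℚ)) (hL : Module.finrank ℚ L = 3) :
    NumberField.classNumber L = 4 ∧
    Nonempty (ClassGroup (NumberField.RingOfIntegers L) ≃*
      Multiplicative (ZMod 2 × ZMod 2)) := by
  haveI : IsCyclotomicExtension {349} ℚ (CyclotomicField 349 ℚ) :=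
    CyclotomicField.isCyclotomicExtension 349 ℚ
  exact C349.final (CyclotomicField 349 ℚ) L hL
end
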